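/- For every even integer r ≥ 4 and every integer Δ ≥ 2 there exists a constant C = C(r,Δ) > 0 such that for every n ≥ 2 there is an r-uniform hypergraph on exactly n vertices that is universal for 𝓕^(r)(n,Δ) and has at most C·n^{r − r/Δ}·(ln n)^{2r/Δ} edges. -/

import Mathlib

/-!
Write `r = 2 * s`. The vertices of the host are distributed over *cells*, which are `Δ`-tuples of
words of length `t` over an alphabet of `4 * Δ` letters, every vertex lying in at most two cells
`c x` and `y x`. Call two words related if they overlap after a shift by at most two letters, and two
cells adjacent if their words are related in at least two of the `Δ` coordinates. The edges of the
host are the `r`-sets that are unions of `s` pairs of vertices in adjacent cells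
(`cellPairs`, `pairEdges`). With `m = (4 * Δ) ^ t` there are `m ^ Δ` cells, each holding `O(n / m ^ Δ)`
vertices, and each cell is adjacent to `O(m ^ (Δ - 2))` others, so there are `O(n ^ 2 / m ^ 2)` pairs
and `O((n / m) ^ r)` edges. Choosing `m ^ Δ` of order `n / log n ^ 2` gives the bound.

For universality, split every edge of a guest hypergraph into `s` pairs of vertices. König's theorem
colours the incidences with `Δ` colours so that incidences at the same vertex, and the two incidences
of a pair, get different colours (`konig_coloring`). Colour `i` then defines a partial self-map of
the vertices with in-degrees at most `Δ`, sending a vertex to its partner, and every pair is recorded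
by two of these maps (`pairing_maps`). Each map is replaced by a rooted forest in which a vertex and
its image are joined by a monotone path of length at most two (`acyclify`). Words are assigned along
the forest, each vertex prefixing one letter to the word of its parent; hence the words of a pair are
related in two coordinates. Choosing the letters by the method of conditional expectations makes all
cells of the guest almost equally large (`walk_core`, `walk_step`, `walk_all`), which needs
`n / m ^ Δ` of order `log n ^ 2`: one logarithm for the union bound, and one for keeping the error
small over the `t` steps during which a letter stays in a word.

Finally the guest must be placed bijectively. The host cells given by `c` alone are balanced only up
to a constant factor relative to those of the guest, but a random second cell `y x` for every host
vertex creates enough expansion between cells (`host_exists`) for Hall's condition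
(`hall_embedding`).
-/

/-- `EH` (a set of edges on the vertex set `Fin N`) is the edge set of an `r`-uniform
hypergraph that is universal for the family `𝓕^(r)(n,Δ)` of `r`-uniform hypergraphs with
at most `n` vertices and maximum vertex degree at most `Δ`. -/
def HypergraphUniversal (r n Δ N : ℕ) (EH : Finset (Finset (Fin N))) : Prop :=
  ∀ EF : Finset (Finset (Fin n)),
    (∀ e ∈ EF, e.card = r) →
    (∀ v : Fin n, (EF.filter (fun e => v ∈ e)).card ≤ Δ) →
    ∃ φ : Fin n → Fin N, Function.Injective φ ∧ ∀ e ∈ EF, e.image φ ∈ EH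

/-! ### König's edge colouring theorem -/

open Finset in
/-- König's edge colouring theorem for `k`-regular bipartite multigraphs. The elements of `Fs` are
the edges, `π₁` and `π₂` give their two ends. Hall's theorem yields a perfect matching, which becomes
one colour class; removing it leaves a `(k - 1)`-regular graph. -/
theorem konig_regular {Fl A B : Type} [Fintype Fl] [DecidableEq Fl] [Fintype A] [DecidableEq A]
    [Fintype B] [DecidableEq B] (π₁ : Fl → A) (π₂ : Fl → B) (k : ℕ) :
    ∀ Fs : Finset Fl, (∀ a, (Fs.filter (fun x => π₁ x = a)).card = k) →
      (∀ b, (Fs.filter (fun x => π₂ x = b)).card = k) →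
      ∃ col : Fl → ℕ, (∀ x ∈ Fs, col x < k) ∧
        ∀ x ∈ Fs, ∀ y ∈ Fs, x ≠ y → (π₁ x = π₁ y ∨ π₂ x = π₂ y) → col x ≠ col y := by
  induction k with
  | zero =>
    intro Fs h1 _
    have hemp : ∀ x, x ∉ Fs := by
      intro x hx
      have := h1 (π₁ x)
      rw [Finset.card_eq_zero] at this
      have hx' : x ∈ Fs.filter (fun y => π₁ y = π₁ x) := by simp [hx]
      rw [this] at hx'
      simp at hx'
    exact ⟨fun _ => 0, fun x hx => absurd hx (hemp x), fun x hx => absurd hx (hemp x)⟩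
  | succ k ih =>
    intro Fs h1 h2
    have cnt1 : ∀ X : Finset A, (Fs.filter (fun x => π₁ x ∈ X)).card = X.card * (k + 1) := by
      intro X
      rw [Finset.card_eq_sum_card_fiberwise (f := π₁) (t := X) (by intro x hx; simpa using (by simpa using hx : x ∈ Fs ∧ π₁ x ∈ X).2)]
      rw [Finset.sum_congr rfl (g := fun _ => k + 1)]
      · simp
      · intro a ha
        rw [← h1 a]
        congr 1
        ext x
        simp only [mem_filter]
        constructor
        · rintro ⟨⟨h, _⟩, h'⟩; exact ⟨h, h'⟩
        · rintro ⟨h, h'⟩; exact ⟨⟨h, h' ▸ ha⟩, h'⟩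
    have cnt2 : ∀ X : Finset B, (Fs.filter (fun x => π₂ x ∈ X)).card = X.card * (k + 1) := by
      intro X
      rw [Finset.card_eq_sum_card_fiberwise (f := π₂) (t := X) (by intro x hx; simpa using (by simpa using hx : x ∈ Fs ∧ π₂ x ∈ X).2)]
      rw [Finset.sum_congr rfl (g := fun _ => k + 1)]
      · simp
      · intro a ha
        rw [← h2 a]
        congr 1
        ext x
        simp only [mem_filter]
        constructor
        · rintro ⟨⟨h, _⟩, h'⟩; exact ⟨h, h'⟩
        · rintro ⟨h, h'⟩; exact ⟨⟨h, h' ▸ ha⟩, h'⟩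
    have hall : ∀ X : Finset A, X.card ≤
        (X.biUnion (fun a => (Fs.filter (fun x => π₁ x = a)).image π₂)).card := by
      intro X
      have hsub : Fs.filter (fun x => π₁ x ∈ X) ⊆ Fs.filter (fun x => π₂ x ∈
          X.biUnion (fun a => (Fs.filter (fun x => π₁ x = a)).image π₂)) := by
        intro x hx
        simp only [mem_filter, mem_biUnion, mem_image] at hx ⊢
        exact ⟨hx.1, π₁ x, hx.2, x, ⟨hx.1, rfl⟩, rfl⟩
      have := Finset.card_le_card hsub
      rw [cnt1, cnt2] at this
      exact Nat.le_of_mul_le_mul_right this (Nat.succ_pos k)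
    obtain ⟨φ, hφ, hφm⟩ := (Finset.all_card_le_biUnion_card_iff_exists_injective _).1 hall
    have hs : ∀ a, ∃ x ∈ Fs, π₁ x = a ∧ π₂ x = φ a := by
      intro a
      have := hφm a
      simp only [mem_image, mem_filter] at this
      obtain ⟨x, ⟨hx, h⟩, h'⟩ := this
      exact ⟨x, hx, h, h'⟩
    choose s hsF hs1 hs2 using hs
    have hcard : Fintype.card A = Fintype.card B := by
      have e1 := cnt1 univ
      have e2 := cnt2 univ
      simp only [mem_univ, filter_true, card_univ] at e1 e2
      exact Nat.eq_of_mul_eq_mul_right (Nat.succ_pos k) (e1.symm.trans e2)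
    have hbij : Function.Bijective φ :=
      (Fintype.bijective_iff_injective_and_card φ).2 ⟨hφ, hcard⟩
    obtain ⟨col, hc1, hc2⟩ := ih (Fs.filter (fun x => x ≠ s (π₁ x)))
      (by
        intro a
        have : (Fs.filter (fun x => x ≠ s (π₁ x))).filter (fun x => π₁ x = a)
            = (Fs.filter (fun x => π₁ x = a)).erase (s a) := by
          ext x
          simp only [mem_filter, mem_erase]
          constructor
          · rintro ⟨⟨h, h'⟩, rfl⟩; exact ⟨h', h, rfl⟩
          · rintro ⟨h', h, rfl⟩; exact ⟨⟨h, h'⟩, rfl⟩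
        rw [this, card_erase_of_mem (by simp [hsF, hs1]), h1]; rfl)
      (by
        intro b
        obtain ⟨a, rfl⟩ := hbij.2 b
        have : (Fs.filter (fun x => x ≠ s (π₁ x))).filter (fun x => π₂ x = φ a)
            = (Fs.filter (fun x => π₂ x = φ a)).erase (s a) := by
          ext x
          simp only [mem_filter, mem_erase]
          constructor
          · rintro ⟨⟨h, h'⟩, h2⟩
            refine ⟨?_, h, h2⟩
            rintro rfl
            rw [hs1] at h'
            exact h' rfl
          · rintro ⟨h', h, h2⟩
            refine ⟨⟨h, ?_⟩, h2⟩
            intro he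
            rw [he, hs2] at h2
            rw [hφ h2] at he
            exact h' he
        rw [this, card_erase_of_mem (by simp [hsF, hs2]), h2]; rfl)
    refine ⟨fun x => if x = s (π₁ x) then k else col x, ?_, ?_⟩
    · intro x hx
      dsimp only
      split_ifs with h
      · exact Nat.lt_succ_self k
      · exact (hc1 x (by simp [hx, h])).trans (Nat.lt_succ_self k)
    · intro x hx y hy hxy hor
      dsimp only
      split_ifs with h h' h'
      · exfalso
        rcases hor with h3 | h3
        · exact hxy (by rw [h, h', h3])
        · rw [h, h', hs2, hs2] at h3
          exact hxy (by rw [h, h', hφ h3])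
      · exact (hc1 y (by simp [hy, h'])).ne'
      · exact (hc1 x (by simp [hx, h])).ne
      · exact hc2 x (by simp [hx, h]) y (by simp [hy, h']) hxy hor

open Finset in
/-- König's edge colouring theorem: the edges of a bipartite multigraph with all degrees at most
`k` can be properly coloured with `k` colours. A second
copy with the two sides exchanged, and parallel edges joining each vertex to its own copy, make the
graph regular. -/
theorem konig_coloring {Fl A B : Type} [Fintype Fl] [DecidableEq Fl] [Fintype A] [DecidableEq A]
    [Fintype B] [DecidableEq B] (π₁ : Fl → A) (π₂ : Fl → B) (k : ℕ)
    (h1 : ∀ a, (univ.filter (fun x => π₁ x = a)).card ≤ k)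
    (h2 : ∀ b, (univ.filter (fun x => π₂ x = b)).card ≤ k) :
    ∃ col : Fl → Fin k,
      ∀ x y, x ≠ y → (π₁ x = π₁ y ∨ π₂ x = π₂ y) → col x ≠ col y := by
  let d₁ : A → ℕ := fun a => k - (univ.filter (fun x => π₁ x = a)).card
  let d₂ : B → ℕ := fun b => k - (univ.filter (fun x => π₂ x = b)).card
  let Fl' := (Fl ⊕ Fl) ⊕ ((Σ a : A, Fin (d₁ a)) ⊕ (Σ b : B, Fin (d₂ b)))
  let ρ₁ : Fl' → A ⊕ B := Sum.elim (Sum.elim (fun x => Sum.inl (π₁ x)) (fun x => Sum.inr (π₂ x)))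
    (Sum.elim (fun a => Sum.inl a.1) (fun b => Sum.inr b.1))
  let ρ₂ : Fl' → A ⊕ B := Sum.elim (Sum.elim (fun x => Sum.inr (π₂ x)) (fun x => Sum.inl (π₁ x)))
    (Sum.elim (fun a => Sum.inl a.1) (fun b => Sum.inr b.1))
  have s1 : ∀ a : A, (∑ x : (Σ a : A, Fin (d₁ a)), if x.1 = a then 1 else 0) = d₁ a := by
    intro a
    rw [Fintype.sum_sigma, Finset.sum_eq_single a (fun b _ hb => by simp [hb]) (by simp)]
    simp
  have s2 : ∀ a : B, (∑ x : (Σ a : B, Fin (d₂ a)), if x.1 = a then 1 else 0) = d₂ a := by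
    intro a
    rw [Fintype.sum_sigma, Finset.sum_eq_single a (fun b _ hb => by simp [hb]) (by simp)]
    simp
  have key1 : ∀ a, (univ.filter (fun x => ρ₁ x = a)).card = k := by
    rintro (a | b)
    · rw [card_filter]
      simp only [Fl', ρ₁, Fintype.sum_sum_type, Sum.elim_inl, Sum.elim_inr, Sum.inl.injEq,
        reduceCtorEq, if_false, sum_const_zero, add_zero, s1]
      rw [← card_filter]
      exact Nat.add_sub_cancel' (h1 a)
    · rw [card_filter]
      simp only [Fl', ρ₁, Fintype.sum_sum_type, Sum.elim_inl, Sum.elim_inr, Sum.inr.injEq,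
        reduceCtorEq, if_false, sum_const_zero, zero_add, s2]
      rw [← card_filter]
      exact Nat.add_sub_cancel' (h2 b)
  have key2 : ∀ a, (univ.filter (fun x => ρ₂ x = a)).card = k := by
    rintro (a | b)
    · rw [card_filter]
      simp only [Fl', ρ₂, Fintype.sum_sum_type, Sum.elim_inl, Sum.elim_inr, Sum.inl.injEq,
        reduceCtorEq, if_false, sum_const_zero, zero_add, add_zero, s1]
      rw [← card_filter]
      exact Nat.add_sub_cancel' (h1 a)
    · rw [card_filter]
      simp only [Fl', ρ₂, Fintype.sum_sum_type, Sum.elim_inl, Sum.elim_inr, Sum.inr.injEq,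
        reduceCtorEq, if_false, sum_const_zero, zero_add, add_zero, s2]
      rw [← card_filter]
      exact Nat.add_sub_cancel' (h2 b)
  obtain ⟨col, hc1, hc2⟩ := konig_regular ρ₁ ρ₂ k univ key1 key2
  refine ⟨fun x => ⟨col (Sum.inl (Sum.inl x)), hc1 _ (mem_univ _)⟩, ?_⟩
  intro x y hxy hor heq
  refine hc2 (Sum.inl (Sum.inl x)) (mem_univ _) (Sum.inl (Sum.inl y)) (mem_univ _) (fun h => hxy (Sum.inl.inj (Sum.inl.inj h))) ?_
    (by simpa using heq)
  rcases hor with h | h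
  · left; simp [ρ₁, h]
  · right; simp [ρ₂, h]

/-! ### From partial maps to rooted forests -/

/-- `Near p v w`: the vertices `v` and `w` are equal or joined by a monotone path with at most two
edges in the rooted forest with parent function `p`. -/
def Near {V : Type} (p : V → Option V) (v w : V) : Prop :=
  v = w ∨ p v = some w ∨ p w = some v ∨ (∃ u, p v = some u ∧ p u = some w) ∨
    ∃ u, p w = some u ∧ p u = some v

/-- Nearness between vertices of a set closed under parents depends only on the parents of vertices
in that set. -/
theorem Near.congr {V : Type} {p q : V → Option V} {W : Finset V}
    (hcl : ∀ v ∈ W, ∀ w, p v = some w → w ∈ W) (hpq : ∀ v ∈ W, q v = p v) {v w : V}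
    (hv : v ∈ W) (hw : w ∈ W) (h : Near p v w) : Near q v w := by
  rcases h with h | h | h | ⟨u, h, h'⟩ | ⟨u, h, h'⟩
  · exact Or.inl h
  · exact Or.inr (Or.inl (by rw [hpq v hv, h]))
  · exact Or.inr (Or.inr (Or.inl (by rw [hpq w hw, h])))
  · refine Or.inr (Or.inr (Or.inr (Or.inl ⟨u, by rw [hpq v hv, h], ?_⟩)))
    rw [hpq u (hcl v hv u h), h']
  · refine Or.inr (Or.inr (Or.inr (Or.inr ⟨u, by rw [hpq w hw, h], ?_⟩)))
    rw [hpq u (hcl w hw u h), h']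

open Finset in
/-- A directed cycle `x 0 → x 1 → ⋯ → x (L - 1) → x 0` is folded into the directed path visiting
`x 0, x (L - 1), x 1, x (L - 2), …` (listed from the root), along which cyclically consecutive
vertices are at distance at most two. The function `ρ` decreases towards the root. -/
theorem zigzag_cycle {V : Type} [DecidableEq V] (g : V → Option V) (x : ℕ → V) (L : ℕ)
    (hinj : ∀ i < L, ∀ j < L, x i = x j → i = j)
    (hstep : ∀ i, i + 1 < L → g (x i) = some (x (i + 1)))
    (hlast : g (x (L - 1)) = some (x 0)) :
    ∃ (p : V → Option V) (ρ : V → ℕ),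
      (∀ i < L, ∀ w, p (x i) = some w → (∃ j < L, w = x j) ∧ ρ w < ρ (x i)) ∧
      (∀ i < L, ∀ j < L, ∀ w, p (x i) = some w → p (x j) = some w → i = j) ∧
      (∀ i < L, ∀ w, g (x i) = some w → Near p (x i) w) := by
  classical
  have hex : ∃ idx : V → ℕ, ∀ i < L, idx (x i) = i := by
    refine ⟨fun v => if h : ∃ i, i < L ∧ x i = v then h.choose else 0, fun i hi => ?_⟩
    have h : ∃ j, j < L ∧ x j = x i := ⟨i, hi, rfl⟩
    simp only [dif_pos h]
    exact hinj _ h.choose_spec.1 _ hi h.choose_spec.2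
  obtain ⟨idx, hidx⟩ := hex
  let P : ℕ → Option V := fun i =>
    if i = 0 then none else if 2 * i < L then some (x (L - i)) else some (x (L - i - 1))
  let R : ℕ → ℕ := fun i => if 2 * i < L then 2 * i else 2 * (L - i) - 1
  have hP : ∀ i < L, ∀ w, P i = some w → ∃ j < L, w = x j ∧ R j < R i ∧
      i ≠ 0 ∧ ((2 * i < L ∧ j = L - i) ∨ (L ≤ 2 * i ∧ j = L - i - 1)) := by
    intro i hi w hw
    simp only [P] at hw
    split_ifs at hw with h1 h2
    · refine ⟨L - i, by omega, (Option.some.inj hw).symm, ?_, h1, Or.inl ⟨h2, rfl⟩⟩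
      simp only [R]
      split_ifs <;> omega
    · refine ⟨L - i - 1, by omega, (Option.some.inj hw).symm, ?_, h1, Or.inr ⟨by omega, rfl⟩⟩
      simp only [R]
      split_ifs <;> omega
  have hp : ∀ i < L, (fun v => P (idx v)) (x i) = P i := fun i hi => by simp only [hidx i hi]
  refine ⟨fun v => P (idx v), fun v => R (idx v), ?_, ?_, ?_⟩
  · intro i hi w hw
    rw [hp i hi] at hw
    obtain ⟨j, hj, rfl, hR, -⟩ := hP i hi w hw
    exact ⟨⟨j, hj, rfl⟩, by simp only [hidx i hi, hidx j hj]; exact hR⟩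
  · intro i hi j hj w hw hw'
    rw [hp i hi] at hw
    rw [hp j hj] at hw'
    obtain ⟨a, ha, rfl, -, h0, h1⟩ := hP i hi w hw
    obtain ⟨b, hb, hab, -, h0', h1'⟩ := hP j hj _ hw'
    have := hinj a ha b hb hab
    omega
  · intro i hi w hw
    by_cases hiL : i + 1 < L
    · rw [hstep i hiL] at hw
      obtain rfl := Option.some.inj hw
      by_cases h1 : 2 * (i + 1) < L
      · refine Or.inr (Or.inr (Or.inr (Or.inr ⟨x (L - (i + 1)), ?_, ?_⟩)))
        · rw [hp _ hiL]
          simp only [P]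
          rw [if_neg (by omega), if_pos h1]
        · rw [hp _ (by omega)]
          simp only [P]
          rw [if_neg (by omega), if_neg (by omega)]
          congr 2; omega
      · by_cases h2 : 2 * i < L
        · by_cases h3 : L = 2 * i + 2
          · refine Or.inr (Or.inr (Or.inl ?_))
            rw [hp _ hiL]
            simp only [P]
            rw [if_neg (by omega), if_neg (by omega)]
            congr 2; omega
          · refine Or.inr (Or.inl ?_)
            rw [hp _ hi]
            simp only [P]
            rw [if_neg (by omega), if_pos (by omega)]
            congr 2; omega
        · refine Or.inr (Or.inr (Or.inr (Or.inl ⟨x (L - i - 1), ?_, ?_⟩)))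
          · rw [hp _ hi]
            simp only [P]
            rw [if_neg (by omega), if_neg (by omega)]
          · rw [hp _ (by omega)]
            simp only [P]
            rw [if_neg (by omega), if_pos (by omega)]
            congr 2; omega
    · have hi' : i = L - 1 := by omega
      subst hi'
      rw [hlast] at hw
      obtain rfl := Option.some.inj hw
      by_cases h1 : L = 1
      · left; subst h1; rfl
      · refine Or.inr (Or.inl ?_)
        rw [hp _ hi]
        simp only [P]
        rw [if_neg (by omega), if_neg (by omega)]
        congr 2; omega

open Finset in
/-- Version of `acyclify` for a vertex set `W` closed under `g`. A vertex that is not a value of `g`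
is removed and reattached as a leaf; if there is none, `g` permutes `W` and one of its cycles is
folded by `zigzag_cycle`. -/
theorem acyclify_aux {V : Type} [Fintype V] [DecidableEq V] (g : V → Option V) :
    ∀ (N : ℕ) (W : Finset V), W.card = N → (∀ v ∈ W, ∀ w, g v = some w → w ∈ W) →
    ∃ (p : V → Option V) (ρ : V → ℕ),
      (∀ v ∈ W, ∀ w, p v = some w → w ∈ W ∧ ρ w < ρ v) ∧
      (∀ w ∈ W, (W.filter (fun v => p v = some w)).card ≤
        (W.filter (fun v => g v = some w)).card) ∧
      (∀ v ∈ W, ∀ w, g v = some w → Near p v w) := by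
  intro N
  induction N using Nat.strong_induction_on with
  | _ N ih =>
  intro W hN hcl
  by_cases hne : W.Nonempty
  swap
  · rw [not_nonempty_iff_eq_empty] at hne
    subst hne
    exact ⟨fun _ => none, fun _ => 0, by simp, by simp, by simp⟩
  by_cases hcov : ∃ v ∈ W, ∀ u ∈ W, g u ≠ some v
  · obtain ⟨v, hv, hvu⟩ := hcov
    have hcl' : ∀ u ∈ W.erase v, ∀ w, g u = some w → w ∈ W.erase v := by
      intro u hu w hw
      rw [mem_erase] at hu ⊢
      refine ⟨?_, hcl u hu.2 w hw⟩
      rintro rfl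
      exact hvu u hu.2 hw
    obtain ⟨p, ρ, h1, h2, h3⟩ := ih (W.erase v).card (by rw [← hN]; exact card_erase_lt_of_mem hv)
      (W.erase v) rfl hcl'
    have hW : W = insert v (W.erase v) := (insert_erase hv).symm
    have hup : ∀ u ∈ W.erase v, Function.update p v (g v) u = p u := fun u hu =>
      Function.update_of_ne (ne_of_mem_erase hu) _ _
    have huρ : ∀ u ∈ W.erase v, Function.update ρ v ((W.erase v).sup ρ + 1) u = ρ u := fun u hu =>
      Function.update_of_ne (ne_of_mem_erase hu) _ _
    refine ⟨Function.update p v (g v), Function.update ρ v ((W.erase v).sup ρ + 1), ?_, ?_, ?_⟩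
    · intro u hu w hw
      by_cases huv : u = v
      · subst huv
        rw [Function.update_self] at hw
        have hw' : w ∈ W.erase u := mem_erase.2 ⟨by rintro rfl; exact hvu _ hu hw, hcl u hu w hw⟩
        refine ⟨hcl u hu w hw, ?_⟩
        rw [Function.update_self, huρ w hw']
        exact Nat.lt_succ_of_le (le_sup hw')
      · have hu' : u ∈ W.erase v := mem_erase.2 ⟨huv, hu⟩
        rw [hup u hu'] at hw
        obtain ⟨a, b⟩ := h1 u hu' w hw
        exact ⟨mem_of_mem_erase a, by rw [huρ u hu', huρ w a]; exact b⟩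
    · intro w hw
      by_cases hwv : w = v
      · subst hwv
        have : W.filter (fun u => Function.update p w (g w) u = some w) = ∅ := by
          rw [filter_eq_empty_iff]
          intro u hu h
          by_cases huw : u = w
          · subst huw
            rw [Function.update_self] at h
            exact hvu _ hu h
          · have hu' : u ∈ W.erase w := mem_erase.2 ⟨huw, hu⟩
            rw [hup u hu'] at h
            exact notMem_erase w W (h1 u hu' w h).1
        rw [this]; simp
      · have hw' : w ∈ W.erase v := mem_erase.2 ⟨hwv, hw⟩
        have e1 : (W.erase v).filter (fun u => Function.update p v (g v) u = some w) =
            (W.erase v).filter (fun u => p u = some w) :=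
          filter_congr fun u hu => by rw [hup u hu]
        rw [hW, filter_insert, filter_insert, Function.update_self, e1]
        have := h2 w hw'
        split_ifs with h
        · rw [card_insert_of_notMem (by simp), card_insert_of_notMem (by simp)]
          omega
        · exact this
    · intro u hu w hw
      by_cases huv : u = v
      · subst huv
        exact Or.inr (Or.inl (by rw [Function.update_self, hw]))
      · have hu' : u ∈ W.erase v := mem_erase.2 ⟨huv, hu⟩
        exact Near.congr (fun a ha b hb => (h1 a ha b hb).1) hup hu' (hcl' u hu' w hw) (h3 u hu' w hw)
  · push Not at hcov
    obtain ⟨z, hz⟩ := hne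
    -- extend `g` from `W` to a permutation `f` of the whole vertex set
    let f : V → V := fun v => if v ∈ W then (g v).getD v else v
    have hfW : ∀ v ∈ W, ∀ w, g v = some w → f v = w := by
      intro v hv w hw
      simp [f, hv, hw]
    have hsurj : Function.Surjective f := by
      intro v
      by_cases hv : v ∈ W
      · obtain ⟨u, hu, h⟩ := hcov v hv
        exact ⟨u, hfW u hu v h⟩
      · exact ⟨v, by simp [f, hv]⟩
    have hfinj : Function.Injective f := Finite.injective_iff_surjective.2 hsurj
    have hgf : ∀ v ∈ W, g v = some (f v) := by
      intro v hv
      -- if `g v = none` then `f v = v`, but `v` is also the image of some other point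
      obtain ⟨u, hu, h⟩ := hcov v hv
      cases hgv : g v with
      | none =>
        exfalso
        have h1 : f v = v := by simp [f, hv, hgv]
        have h2 : f u = v := hfW u hu v h
        have := hfinj (h1.trans h2.symm)
        rw [← this, hgv] at h
        cases h
      | some w => rw [hfW v hv w hgv]
    have hit : ∀ k, f^[k] z ∈ W := by
      intro k
      induction k with
      | zero => exact hz
      | succ k ihk =>
        rw [Function.iterate_succ_apply']
        exact hcl _ ihk _ (hgf _ ihk)
    set L := Function.minimalPeriod f z with hL
    have hLpos : 0 < L := Function.minimalPeriod_pos_of_mem_periodicPts (hfinj.mem_periodicPts z)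
    have hLz : f^[L] z = z := Function.iterate_minimalPeriod
    obtain ⟨q, τ, q1, q2, q3⟩ := zigzag_cycle g (fun k => f^[k] z) L
      (fun i hi j hj h => Function.iterate_injOn_Iio_minimalPeriod hi hj h)
      (fun i _ => by
        rw [Function.iterate_succ_apply']
        exact hgf _ (hit i))
      (by
        rw [hgf _ (hit _), ← Function.iterate_succ_apply' f, Nat.succ_eq_add_one,
          Nat.sub_add_cancel hLpos, hLz]
        rfl)
    let O : Finset V := (range L).image (fun k => f^[k] z)
    have hO : ∀ v, v ∈ O ↔ ∃ k < L, f^[k] z = v := by simp [O]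
    have hOW : O ⊆ W := by
      intro v hv
      obtain ⟨k, _, rfl⟩ := (hO v).1 hv
      exact hit k
    have hzO : z ∈ O := (hO z).2 ⟨0, hLpos, rfl⟩
    have hOpre : ∀ v, f v ∈ O → v ∈ O := by
      intro v hv
      obtain ⟨k, hk, h⟩ := (hO _).1 hv
      rw [hO]
      cases k with
      | zero =>
        refine ⟨L - 1, by omega, hfinj ?_⟩
        rw [← Function.iterate_succ_apply' f, Nat.succ_eq_add_one, Nat.sub_add_cancel hLpos, hLz, ← h]
        rfl
      | succ k =>
        refine ⟨k, by omega, hfinj ?_⟩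
        rw [← Function.iterate_succ_apply' f, h]
    have hcl' : ∀ u ∈ W \ O, ∀ w, g u = some w → w ∈ W \ O := by
      intro u hu w hw
      rw [mem_sdiff] at hu ⊢
      refine ⟨hcl u hu.1 w hw, fun hwO => hu.2 (hOpre u ?_)⟩
      rw [hfW u hu.1 w hw]
      exact hwO
    obtain ⟨p, ρ, h1, h2, h3⟩ := ih (W \ O).card (by
        rw [← hN]
        refine card_lt_card ⟨sdiff_subset, fun h => ?_⟩
        have := h hz
        rw [mem_sdiff] at this
        exact this.2 hzO) (W \ O) rfl hcl'
    let p' : V → Option V := fun v => if v ∈ O then q v else p v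
    let ρ' : V → ℕ := fun v => if v ∈ O then τ v else ρ v
    have pO : ∀ v ∈ O, p' v = q v := fun v hv => if_pos hv
    have pW : ∀ v ∈ W \ O, p' v = p v := fun v hv => if_neg (mem_sdiff.1 hv).2
    have ρO : ∀ v ∈ O, ρ' v = τ v := fun v hv => if_pos hv
    have ρW : ∀ v ∈ W \ O, ρ' v = ρ v := fun v hv => if_neg (mem_sdiff.1 hv).2
    have hqO : ∀ v ∈ O, ∀ w, q v = some w → w ∈ O ∧ τ w < τ v := by
      intro v hv w hw
      obtain ⟨k, hk, rfl⟩ := (hO v).1 hv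
      obtain ⟨⟨j, hj, rfl⟩, h⟩ := q1 k hk w hw
      exact ⟨(hO _).2 ⟨j, hj, rfl⟩, h⟩
    refine ⟨p', ρ', ?_, ?_, ?_⟩
    · intro v hv w hw
      by_cases hvO : v ∈ O
      · rw [pO v hvO] at hw
        obtain ⟨a, b⟩ := hqO v hvO w hw
        exact ⟨hOW a, by rw [ρO v hvO, ρO w a]; exact b⟩
      · have hv' := mem_sdiff.2 ⟨hv, hvO⟩
        rw [pW v hv'] at hw
        obtain ⟨a, b⟩ := h1 v hv' w hw
        exact ⟨(mem_sdiff.1 a).1, by rw [ρW v hv', ρW w a]; exact b⟩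
    · intro w hw
      by_cases hwO : w ∈ O
      · refine le_trans (b := 1) ?_ ?_
        · rw [card_le_one]
          intro a ha b hb
          rw [mem_filter] at ha hb
          have hmem : ∀ a ∈ W, p' a = some w → a ∈ O := by
            intro a ha h
            by_contra haO
            have ha' := mem_sdiff.2 ⟨ha, haO⟩
            rw [pW a ha'] at h
            exact (mem_sdiff.1 (h1 a ha' w h).1).2 hwO
          have haO := hmem a ha.1 ha.2
          have hbO := hmem b hb.1 hb.2
          have ha2 := ha.2
          have hb2 := hb.2
          rw [pO a haO] at ha2
          rw [pO b hbO] at hb2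
          obtain ⟨i, hi, rfl⟩ := (hO a).1 haO
          obtain ⟨j, hj, rfl⟩ := (hO b).1 hbO
          rw [q2 i hi j hj w ha2 hb2]
        · obtain ⟨u, hu, h⟩ := hcov w hw
          exact card_pos.2 ⟨u, mem_filter.2 ⟨hu, h⟩⟩
      · have hw' := mem_sdiff.2 ⟨hw, hwO⟩
        have e : W.filter (fun v => p' v = some w) = (W \ O).filter (fun v => p v = some w) := by
          ext v
          simp only [mem_filter]
          constructor
          · rintro ⟨hv, h⟩
            have hvO : v ∉ O := by
              intro hvO
              rw [pO v hvO] at h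
              exact hwO (hqO v hvO w h).1
            have hv' := mem_sdiff.2 ⟨hv, hvO⟩
            exact ⟨hv', by rw [← pW v hv', h]⟩
          · rintro ⟨hv, h⟩
            exact ⟨(mem_sdiff.1 hv).1, by rw [pW v hv, h]⟩
        rw [e]
        exact (h2 w hw').trans (card_le_card (filter_subset_filter _ sdiff_subset))
    · intro v hv w hw
      by_cases hvO : v ∈ O
      · obtain ⟨k, hk, rfl⟩ := (hO v).1 hvO
        have hn := q3 k hk w hw
        have hwO : w ∈ O := by
          by_contra hwO
          have hfw := hfW _ hv w hw
          rw [← Function.iterate_succ_apply' f] at hfw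
          by_cases hkL : k + 1 < L
          · exact hwO ((hO w).2 ⟨k + 1, hkL, hfw⟩)
          · have : k + 1 = L := by omega
            rw [Nat.succ_eq_add_one, this, hLz] at hfw
            exact hwO (hfw ▸ hzO)
        exact Near.congr (fun a ha b hb => (hqO a ha b hb).1) pO hvO hwO hn
      · have hv' := mem_sdiff.2 ⟨hv, hvO⟩
        exact Near.congr (fun a ha b hb => (h1 a ha b hb).1) pW hv' (hcl' v hv' w hw) (h3 v hv' w hw)

open Finset in
/-- Every partial self-map `g` can be replaced by the parent function `p` of a rooted forest, without
increasing in-degrees, so that `v` and `g v` are always joined by a monotone path of length at most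
two. The height function `ρ` witnesses acyclicity. -/
theorem acyclify {V : Type} [Fintype V] [DecidableEq V] (g : V → Option V) :
    ∃ (p : V → Option V) (ρ : V → ℕ),
      (∀ v w, p v = some w → ρ w < ρ v) ∧
      (∀ w, (univ.filter (fun v => p v = some w)).card ≤
        (univ.filter (fun v => g v = some w)).card) ∧
      (∀ v w, g v = some w → Near p v w) := by
  obtain ⟨p, ρ, h1, h2, h3⟩ := acyclify_aux g _ univ rfl (fun _ _ _ _ => mem_univ _)
  exact ⟨p, ρ, fun v w h => (h1 v (mem_univ _) w h).2, fun w => h2 w (mem_univ _),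
    fun v w h => h3 v (mem_univ _) w h⟩

/-! ### Equidistributed words on rooted forests -/

/-- Indicator of the event that the first `t - j` letters of the state `a` are the letters
`j, …, t - 1` of the target `s`; equivalently, a walk that reads `a` from now on hits `s` after
prefixing the right `j` further letters. -/
noncomputable def hitInd {D : ℕ} (t j : ℕ) (s a : ℕ → Fin D) : ℝ :=
  open Classical in if ∀ i, i + j < t → a i = s (i + j) then 1 else 0

theorem hitInd_nonneg {D : ℕ} (t j : ℕ) (s a : ℕ → Fin D) : 0 ≤ hitInd t j s a := by
  unfold hitInd; split_ifs <;> norm_num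

theorem hitInd_le_one {D : ℕ} (t j : ℕ) (s a : ℕ → Fin D) : hitInd t j s a ≤ 1 := by
  unfold hitInd; split_ifs <;> norm_num

theorem hitInd_top {D : ℕ} (t : ℕ) (s a : ℕ → Fin D) : hitInd t t s a = 1 := by
  unfold hitInd
  rw [if_pos]
  intro i hi; omega

/-- Prefixing the letter `l` to the state `a` hits `s` exactly when `l` is the `j`-th letter of `s`
and `a` already agrees with the later letters. -/
theorem hitInd_cons {D : ℕ} {t j : ℕ} (hj : j < t) (s a : ℕ → Fin D) (l : Fin D) :
    hitInd t j s (fun i => if i = 0 then l else a (i - 1)) =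
      (if l = s j then 1 else 0) * hitInd t (j + 1) s a := by
  unfold hitInd
  by_cases h : l = s j
  · rw [if_pos h, one_mul]
    congr 1
    apply propext
    constructor
    · intro H i hi
      have := H (i + 1) (by omega)
      simp only [Nat.add_eq_zero_iff, one_ne_zero, and_false, if_false, Nat.add_sub_cancel] at this
      rw [this]; congr 1; omega
    · intro H i hi
      cases i with
      | zero => simpa using h
      | succ i =>
        simp only [Nat.add_eq_zero_iff, one_ne_zero, and_false, if_false, Nat.add_sub_cancel]
        rw [H i (by omega)]; congr 1; omega
  · rw [if_neg h, zero_mul, if_neg]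
    intro H
    have := H 0 (by omega)
    simp only [if_true, zero_add] at this
    exact h this

/-- For `0 ≤ Y ≤ S ≤ 1` the exponential moments of `±Y` under the uniform distribution are bounded
by the exponential of the mean, distorted by the factor `1 ± S`. -/
theorem exp_average_le {ι : Type} [Fintype ι] [Nonempty ι] (Y : ι → ℝ) (S σ : ℝ)
    (hσ : σ = 1 ∨ σ = -1) (hY : ∀ l, 0 ≤ Y l) (hYS : ∀ l, Y l ≤ S) (hS : S ≤ 1) :
    ∑ l, Real.exp (σ * Y l) ≤ Fintype.card ι *
      Real.exp (σ * ((1 + σ * S) * ((∑ l, Y l) / Fintype.card ι))) := by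
  have hσ2 : σ * σ = 1 := by rcases hσ with h | h <;> rw [h] <;> norm_num
  have hσa : |σ| = 1 := by rcases hσ with h | h <;> rw [h] <;> norm_num
  have hc : (0 : ℝ) < Fintype.card ι := by exact_mod_cast Fintype.card_pos
  have h1 : ∀ l, Real.exp (σ * Y l) ≤ 1 + σ * (1 + σ * S) * Y l := by
    intro l
    have hab : |σ * Y l| ≤ 1 := by
      rw [abs_mul, hσa, one_mul, abs_of_nonneg (hY l)]
      exact (hYS l).trans hS
    have := (abs_le.1 (Real.abs_exp_sub_one_sub_id_le hab)).2
    have h2 : (σ * Y l) ^ 2 = Y l * Y l := by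
      rw [mul_pow, pow_two, hσ2, one_mul, pow_two]
    have h3 : Y l * Y l ≤ S * Y l := mul_le_mul_of_nonneg_right (hYS l) (hY l)
    have h4 : σ * (1 + σ * S) * Y l = σ * Y l + (σ * σ) * (S * Y l) := by ring
    rw [h4, hσ2]
    linarith
  calc ∑ l, Real.exp (σ * Y l) ≤ ∑ l, (1 + σ * (1 + σ * S) * Y l) :=
        Finset.sum_le_sum fun l _ => h1 l
    _ = Fintype.card ι * (σ * ((1 + σ * S) * ((∑ l, Y l) / Fintype.card ι)) + 1) := by
        rw [Finset.sum_add_distrib, ← Finset.mul_sum]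
        simp only [Finset.sum_const, Finset.card_univ, nsmul_eq_mul, mul_one]
        field_simp
        ring
    _ ≤ _ := mul_le_mul_of_nonneg_left (Real.add_one_le_exp _) hc.le

/-- Derandomisation of `exp_average_le`: some single outcome satisfies the bound for a given
nonnegative combination of exponentials. -/
theorem exists_exp_le_average {ι Q : Type} [Fintype ι] [Nonempty ι] [Fintype Q] (S : ℝ) (hS : S ≤ 1)
    (σ A : Q → ℝ) (hσ : ∀ q, σ q = 1 ∨ σ q = -1) (hA : ∀ q, 0 ≤ A q) (Y : Q → ι → ℝ)
    (hY : ∀ q l, 0 ≤ Y q l) (hYS : ∀ q l, Y q l ≤ S) :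
    ∃ l, ∑ q, A q * Real.exp (σ q * Y q l) ≤ ∑ q, A q *
      Real.exp (σ q * ((1 + σ q * S) * ((∑ l, Y q l) / Fintype.card ι))) := by
  have hc : (0 : ℝ) < Fintype.card ι := by exact_mod_cast Fintype.card_pos
  set R := ∑ q, A q * Real.exp (σ q * ((1 + σ q * S) * ((∑ l, Y q l) / Fintype.card ι))) with hR
  have hsum : ∑ l, ∑ q, A q * Real.exp (σ q * Y q l) ≤ ∑ _l : ι, R := by
    rw [Finset.sum_comm]
    calc ∑ q, ∑ l, A q * Real.exp (σ q * Y q l)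
        = ∑ q, A q * ∑ l, Real.exp (σ q * Y q l) := by simp only [Finset.mul_sum]
      _ ≤ ∑ q, A q * (Fintype.card ι *
            Real.exp (σ q * ((1 + σ q * S) * ((∑ l, Y q l) / Fintype.card ι)))) :=
          Finset.sum_le_sum fun q _ => mul_le_mul_of_nonneg_left
            (exp_average_le (Y q) S (σ q) (hσ q) (hY q) (hYS q) hS) (hA q)
      _ = ∑ _l : ι, R := by
          rw [Finset.sum_const, Finset.card_univ, nsmul_eq_mul, hR, Finset.mul_sum]
          exact Finset.sum_congr rfl fun q _ => by ring
  obtain ⟨l, _, hl⟩ := Finset.exists_le_of_sum_le Finset.univ_nonempty hsum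
  exact ⟨l, hl⟩

/-- The number of words `b` for which a walk reading `b` hits `s` after prefixing `j` further
letters: `t - j` letters are prescribed and `j` are free. -/
theorem sum_hitInd_root {D t j : ℕ} (hD : 0 < D) (hj : j ≤ t) (s : ℕ → Fin D) :
    ∑ b : Fin t → Fin D, hitInd t j s (fun i => if h : i < t then b ⟨i, h⟩ else ⟨0, hD⟩) =
      (D : ℝ) ^ j := by
  classical
  have h1 : ∀ b : Fin t → Fin D,
      hitInd t j s (fun i => if h : i < t then b ⟨i, h⟩ else ⟨0, hD⟩) =
        ∏ i : Fin t, if (i : ℕ) + j < t then (if b i = s (i + j) then (1 : ℝ) else 0) else 1 := by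
    intro b
    unfold hitInd
    split_ifs with H
    · refine (Finset.prod_eq_one fun i _ => ?_).symm
      split_ifs with h1 h2
      · rfl
      · exfalso
        have := H i h1
        simp only [dif_pos i.2] at this
        exact h2 this
      · rfl
    · push Not at H
      obtain ⟨i, hi, hne⟩ := H
      simp only [dif_pos (show i < t by omega)] at hne
      refine (Finset.prod_eq_zero (Finset.mem_univ ⟨i, by omega⟩) ?_).symm
      rw [if_pos hi, if_neg hne]
  simp only [h1]
  rw [← Fintype.prod_sum (fun (i : Fin t) (x : Fin D) =>
    if (i : ℕ) + j < t then (if x = s (i + j) then (1 : ℝ) else 0) else 1)]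
  have h2 : ∀ i : Fin t, (∑ x : Fin D,
      if (i : ℕ) + j < t then (if x = s (i + j) then (1 : ℝ) else 0) else 1) =
      if (i : ℕ) + j < t then 1 else (D : ℝ) := by
    intro i
    split_ifs <;> simp
  simp only [h2]
  rw [Fin.prod_univ_eq_prod_range (fun i => if i + j < t then (1 : ℝ) else (D : ℝ)) t]
  obtain ⟨k, rfl⟩ := Nat.exists_eq_add_of_le' hj
  rw [Finset.prod_range_add, Finset.prod_eq_one, one_mul]
  · rw [Finset.prod_congr rfl (g := fun _ => (D : ℝ))]
    · simp
    · intro i hi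
      rw [if_neg (by omega)]
  · intro i hi
    rw [if_pos (by have := Finset.mem_range.1 hi; omega)]

/-- Summation by parts behind the transfer of weights to a parent: the weight `b j` at level `j`,
damped by `β`, moves to level `j + 1`. The top level `t` is split off because the hit indicator is
identically one there. -/
theorem shift_weights {t : ℕ} (ht : 1 ≤ t) (G : ℕ → ℝ) (hG : G t = 1) (β : ℝ) (a b : ℕ → ℝ) :
    ∑ j ∈ Finset.range t, (a j + if j = 0 then 0 else β * b (j - 1)) * G j + β * b (t - 1) =
      ∑ j ∈ Finset.range t, a j * G j + β * ∑ j ∈ Finset.range t, b j * G (j + 1) := by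
  obtain ⟨k, rfl⟩ := Nat.exists_eq_add_of_le' ht
  simp only [add_mul, Finset.sum_add_distrib]
  rw [Finset.sum_range_succ' (fun j => (if j = 0 then 0 else β * b (j - 1)) * G j),
    Finset.sum_range_succ (fun j => b j * G (j + 1)), hG, mul_add, Finset.mul_sum]
  simp only [Nat.add_sub_cancel, Nat.add_eq_zero_iff, one_ne_zero, and_false, if_false, if_true,
    mul_one, zero_mul, add_zero, mul_assoc]
  ring

open Finset in
/-- Method of conditional expectations for words on a rooted forest. Roots receive arbitrary words of
length `t`, and every other vertex prefixes one letter to the word of its parent. The conclusion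
bounds a combination of exponential moments of weighted hit counts by its heuristic value.

The vertices are removed starting with the highest. A vertex `u` whose weights are to be averaged
out passes them to its parent, one level up and multiplied by `(1 + σ * S) / D`; the hypothesis on
the sums of weights leaves room for one such transfer from every child. -/
theorem walk_core {V Q : Type} [DecidableEq V] [Fintype Q] (p : V → Option V) (ρ : V → ℕ)
    (hρ : ∀ v w, p v = some w → ρ w < ρ v) (D t : ℕ) (hD : 0 < D) (ht : 1 ≤ t) (S : ℝ)
    (hS0 : 0 ≤ S) (hS1 : S ≤ 1) (σ : Q → ℝ) (hσ : ∀ q, σ q = 1 ∨ σ q = -1)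
    (tgt : Q → ℕ → Fin D) :
    ∀ (N : ℕ) (U : Finset V), U.card = N → (∀ v ∈ U, ∀ w, p v = some w → w ∈ U) →
    ∀ (c : Q → ℝ), (∀ q, 0 ≤ c q) → ∀ (Λ : Q → V → ℕ → ℝ), (∀ q v j, 0 ≤ Λ q v j) →
    (∀ q, ∀ u ∈ U, ∑ j ∈ range t, Λ q u j +
      2 * S / D * (U.filter (fun v => p v = some u)).card ≤ S) →
    ∃ f : V → ℕ → Fin D, (∀ v ∈ U, ∀ w, p v = some w → ∀ i, f v (i + 1) = f w i) ∧
      ∑ q, c q * Real.exp (σ q * ∑ u ∈ U, ∑ j ∈ range t, Λ q u j * hitInd t j (tgt q) (f u)) ≤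
      ∑ q, c q * Real.exp (σ q * ∑ u ∈ U, ∑ j ∈ range t,
        Λ q u j * ((1 + σ q * S) / D) ^ (t - j)) := by
  have hDR : (0 : ℝ) < D := by exact_mod_cast hD
  have : Nonempty (Fin D) := ⟨⟨0, hD⟩⟩
  have hσS : ∀ q, 0 ≤ 1 + σ q * S := by
    intro q
    rcases hσ q with h | h <;> rw [h] <;> linarith
  have hσS2 : ∀ q, 1 + σ q * S ≤ 2 := by
    intro q
    rcases hσ q with h | h <;> rw [h] <;> linarith
  intro N
  induction N with
  | zero =>
    intro U hU _ c hc Λ hΛ _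
    rw [card_eq_zero] at hU
    subst hU
    exact ⟨fun _ _ => ⟨0, hD⟩, by simp, by simp⟩
  | succ N ih =>
    intro U hU hcl c hc Λ hΛ hsum
    have hUne : U.Nonempty := card_pos.1 (by omega)
    obtain ⟨u, hu, hmax⟩ := exists_max_image U ρ hUne
    have hnop : ∀ v ∈ U, p v ≠ some u := by
      intro v hv h
      have := hρ v u h
      have := hmax v hv
      omega
    have hcl' : ∀ v ∈ U.erase u, ∀ w, p v = some w → w ∈ U.erase u := by
      intro v hv w hw
      rw [mem_erase] at hv ⊢
      refine ⟨?_, hcl v hv.2 w hw⟩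
      rintro rfl
      exact hnop v hv.2 hw
    have hcard : (U.erase u).card = N := by rw [card_erase_of_mem hu, hU]; rfl
    have hfil : ∀ w, ((U.erase u).filter (fun v => p v = some w)).card ≤
        (U.filter (fun v => p v = some w)).card := fun w =>
      card_le_card (filter_subset_filter _ (erase_subset _ _))
    have hmono : ∀ x y : ℕ, x ≤ y → 2 * S / D * (x : ℝ) ≤ 2 * S / D * y := fun x y h =>
      mul_le_mul_of_nonneg_left (by exact_mod_cast h) (by positivity)
    have hΛu : ∀ q, ∑ j ∈ range t, Λ q u j ≤ S := by
      intro q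
      have h1 := hsum q u hu
      have : 0 ≤ 2 * S / D * ((U.filter (fun v => p v = some u)).card : ℝ) := by positivity
      linarith
    have hYS : ∀ q (G : ℕ → ℝ), (∀ j, 0 ≤ G j) → (∀ j, G j ≤ 1) →
        ∑ j ∈ range t, Λ q u j * G j ≤ S := by
      intro q G _ h1
      refine le_trans (sum_le_sum fun j _ => ?_) (hΛu q)
      exact mul_le_of_le_one_right (hΛ q u j) (h1 j)
    -- updating the word of `u` does not affect the other vertices
    have hsplit : ∀ (f : V → ℕ → Fin D) (x : ℕ → Fin D) (q : Q),
        ∑ v ∈ U, ∑ j ∈ range t, Λ q v j * hitInd t j (tgt q) (Function.update f u x v) =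
        ∑ v ∈ U.erase u, ∑ j ∈ range t, Λ q v j * hitInd t j (tgt q) (f v) +
          ∑ j ∈ range t, Λ q u j * hitInd t j (tgt q) x := by
      intro f x q
      rw [← sum_erase_add _ _ hu, Function.update_self]
      congr 1
      refine sum_congr rfl fun v hv => ?_
      rw [Function.update_of_ne (ne_of_mem_erase hv)]
    cases hpu : p u with
    | none =>
      obtain ⟨f, hf1, hf2⟩ := ih (U.erase u) hcard hcl'
        (fun q => c q * Real.exp (σ q * ∑ j ∈ range t, Λ q u j * ((1 + σ q * S) / D) ^ (t - j)))
        (fun q => mul_nonneg (hc q) (Real.exp_pos _).le) Λ hΛ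
        (fun q v hv => le_trans (by have := hmono _ _ (hfil v); linarith)
          (hsum q v (mem_of_mem_erase hv)))
      let ext : (Fin t → Fin D) → ℕ → Fin D := fun b i => if h : i < t then b ⟨i, h⟩ else ⟨0, hD⟩
      obtain ⟨b, hb⟩ := exists_exp_le_average (ι := Fin t → Fin D) S hS1 σ
        (fun q => c q * Real.exp (σ q * ∑ v ∈ U.erase u, ∑ j ∈ range t,
          Λ q v j * hitInd t j (tgt q) (f v))) hσ
        (fun q => mul_nonneg (hc q) (Real.exp_pos _).le)
        (fun q b => ∑ j ∈ range t, Λ q u j * hitInd t j (tgt q) (ext b))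
        (fun q b => sum_nonneg fun j _ => mul_nonneg (hΛ q u j) (hitInd_nonneg _ _ _ _))
        (fun q b => hYS q _ (fun _ => hitInd_nonneg _ _ _ _) (fun _ => hitInd_le_one _ _ _ _))
      refine ⟨Function.update f u (ext b), ?_, ?_⟩
      · intro v hv w hw i
        have hvu : v ≠ u := by rintro rfl; rw [hpu] at hw; cases hw
        have hv' := mem_erase.2 ⟨hvu, hv⟩
        rw [Function.update_of_ne hvu, Function.update_of_ne (ne_of_mem_erase (hcl' v hv' w hw))]
        exact hf1 v hv' w hw i
      · have havg : ∀ q, σ q * ((1 + σ q * S) * ((∑ b, ∑ j ∈ range t,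
            Λ q u j * hitInd t j (tgt q) (ext b)) / Fintype.card (Fin t → Fin D))) ≤
            σ q * ∑ j ∈ range t, Λ q u j * ((1 + σ q * S) / D) ^ (t - j) := by
          intro q
          rw [sum_comm]
          simp only [← mul_sum]
          rw [sum_congr rfl (fun j hj => by
            rw [sum_hitInd_root hD (mem_range.1 hj).le])]
          rw [Fintype.card_fun, Fintype.card_fin, Fintype.card_fin, Nat.cast_pow, sum_div, mul_sum,
            mul_sum, mul_sum]
          refine sum_le_sum fun j hj => ?_
          have hjt := mem_range.1 hj
          have e : (D : ℝ) ^ t = D ^ (t - j) * D ^ j := by rw [← pow_add]; congr 1; omega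
          rw [e, mul_div_assoc, div_mul_cancel_right₀ (by positivity), div_pow]
          have e2 : ∀ x : ℝ, x * (Λ q u j * ((D : ℝ) ^ (t - j))⁻¹) =
            Λ q u j * ((D : ℝ) ^ (t - j))⁻¹ * x := fun x => mul_comm _ _
          have hnn : 0 ≤ Λ q u j * ((D : ℝ) ^ (t - j))⁻¹ := mul_nonneg (hΛ q u j) (by positivity)
          rcases hσ q with h | h
          · have : (1 + S) ≤ (1 + S) ^ (t - j) := le_self_pow₀ (by linarith) (by omega)
            rw [h, one_mul, one_mul, one_mul, div_eq_mul_inv]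
            nlinarith [mul_le_mul_of_nonneg_left this hnn]
          · have : (1 + -1 * S) ^ (t - j) ≤ (1 + -1 * S) :=
              pow_le_of_le_one (by linarith) (by linarith) (by omega)
            rw [h, div_eq_mul_inv]
            nlinarith [mul_le_mul_of_nonneg_left this hnn]
        calc _ = ∑ q, c q * Real.exp (σ q * ∑ v ∈ U.erase u, ∑ j ∈ range t,
              Λ q v j * hitInd t j (tgt q) (f v)) *
              Real.exp (σ q * ∑ j ∈ range t, Λ q u j * hitInd t j (tgt q) (ext b)) := by
              refine sum_congr rfl fun q _ => ?_
              rw [hsplit, mul_add, Real.exp_add, mul_assoc]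
          _ ≤ _ := hb
          _ ≤ ∑ q, c q * Real.exp (σ q * ∑ v ∈ U.erase u, ∑ j ∈ range t,
              Λ q v j * hitInd t j (tgt q) (f v)) *
              Real.exp (σ q * ∑ j ∈ range t, Λ q u j * ((1 + σ q * S) / D) ^ (t - j)) := by
              refine sum_le_sum fun q _ => mul_le_mul_of_nonneg_left ?_
                (mul_nonneg (hc q) (Real.exp_pos _).le)
              exact Real.exp_le_exp.2 (havg q)
          _ ≤ _ := by
              refine le_trans (le_of_eq ?_) (hf2.trans (le_of_eq ?_))
              · exact sum_congr rfl fun q _ => by ring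
              · refine sum_congr rfl fun q _ => ?_
                rw [mul_assoc, ← Real.exp_add, ← mul_add, ← sum_erase_add _ _ hu, add_comm]
    | some w =>
      have hw' : w ∈ U.erase u := mem_erase.2 ⟨by rintro rfl; exact hnop _ hu hpu, hcl u hu w hpu⟩
      let β : Q → ℝ := fun q => (1 + σ q * S) / D
      have hβ0 : ∀ q, 0 ≤ β q := fun q => div_nonneg (hσS q) hDR.le
      have hβ2 : ∀ q, β q ≤ 2 / D := fun q => div_le_div_of_nonneg_right (hσS2 q) hDR.le
      let Λ' : Q → V → ℕ → ℝ := fun q v j =>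
        if v = w then Λ q w j + (if j = 0 then 0 else β q * Λ q u (j - 1)) else Λ q v j
      have hΛ'w : ∀ q j, Λ' q w j = Λ q w j + (if j = 0 then 0 else β q * Λ q u (j - 1)) :=
        fun q j => if_pos rfl
      have hΛ'v : ∀ q v, v ≠ w → ∀ j, Λ' q v j = Λ q v j := fun q v hv j => if_neg hv
      have hΛ'0 : ∀ q v j, 0 ≤ Λ' q v j := by
        intro q v j
        by_cases hv : v = w
        · subst hv
          rw [hΛ'w]
          have h1 := hΛ q v j
          have h2 := mul_nonneg (hβ0 q) (hΛ q u (j - 1))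
          split_ifs <;> linarith
        · rw [hΛ'v q v hv]; exact hΛ q v j
      -- the weight of `u` is transferred to its parent `w`, one level up
      have htrans : ∀ q (G : V → ℕ → ℝ), G w t = 1 →
          ∑ v ∈ U.erase u, ∑ j ∈ range t, Λ' q v j * G v j + β q * Λ q u (t - 1) =
          ∑ v ∈ U.erase u, ∑ j ∈ range t, Λ q v j * G v j +
            β q * ∑ j ∈ range t, Λ q u j * G w (j + 1) := by
        intro q G hG
        rw [← sum_erase_add _ _ hw', ← sum_erase_add _ _ hw']
        have e1 : ∑ v ∈ (U.erase u).erase w, ∑ j ∈ range t, Λ' q v j * G v j =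
            ∑ v ∈ (U.erase u).erase w, ∑ j ∈ range t, Λ q v j * G v j :=
          sum_congr rfl fun v hv => sum_congr rfl fun j _ => by
            rw [hΛ'v q v (ne_of_mem_erase hv)]
        have e2 := shift_weights ht (G w) hG (β q) (Λ q w) (Λ q u)
        simp only [hΛ'w]
        rw [e1]
        linarith
      obtain ⟨f, hf1, hf2⟩ := ih (U.erase u) hcard hcl'
        (fun q => c q * Real.exp (σ q * (β q * Λ q u (t - 1))))
        (fun q => mul_nonneg (hc q) (Real.exp_pos _).le) Λ' hΛ'0
        (by
          intro q v hv
          by_cases hvw : v = w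
          · subst hvw
            have hc1 : ((U.erase u).filter (fun x => p x = some v)).card + 1 =
                (U.filter (fun x => p x = some v)).card := by
              rw [filter_erase, card_erase_add_one]
              exact mem_filter.2 ⟨hu, hpu⟩
            have h1 := hsum q v (mem_of_mem_erase hv)
            rw [← hc1] at h1
            push_cast at h1
            have e2 := shift_weights ht (fun _ => 1) rfl (β q) (Λ q v) (Λ q u)
            simp only [mul_one] at e2
            have h3 : 0 ≤ β q * Λ q u (t - 1) := mul_nonneg (hβ0 q) (hΛ _ _ _)
            have h4 : β q * ∑ j ∈ range t, Λ q u j ≤ 2 / D * S :=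
              mul_le_mul (hβ2 q) (hΛu q) (sum_nonneg fun j _ => hΛ q u j) (by positivity)
            simp only [hΛ'w]
            have h5 : 2 / (D : ℝ) * S = 2 * S / D := by ring
            rw [h5] at h4
            linarith
          · simp only [hΛ'v q v hvw]
            have := hmono _ _ (hfil v)
            have := hsum q v (mem_of_mem_erase hv)
            linarith)
      obtain ⟨l, hl⟩ := exists_exp_le_average (ι := Fin D) S hS1 σ
        (fun q => c q * Real.exp (σ q * ∑ v ∈ U.erase u, ∑ j ∈ range t,
          Λ q v j * hitInd t j (tgt q) (f v))) hσ
        (fun q => mul_nonneg (hc q) (Real.exp_pos _).le)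
        (fun q l => ∑ j ∈ range t, Λ q u j * hitInd t j (tgt q)
          (fun i => if i = 0 then l else f w (i - 1)))
        (fun q l => sum_nonneg fun j _ => mul_nonneg (hΛ q u j) (hitInd_nonneg _ _ _ _))
        (fun q l => hYS q _ (fun _ => hitInd_nonneg _ _ _ _) (fun _ => hitInd_le_one _ _ _ _))
      refine ⟨Function.update f u (fun i => if i = 0 then l else f w (i - 1)), ?_, ?_⟩
      · intro v hv x hx i
        by_cases hvu : v = u
        · subst hvu
          rw [hpu] at hx
          obtain rfl := Option.some.inj hx
          rw [Function.update_self, Function.update_of_ne (ne_of_mem_erase hw')]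
          simp
        · have hv' := mem_erase.2 ⟨hvu, hv⟩
          rw [Function.update_of_ne hvu, Function.update_of_ne (ne_of_mem_erase (hcl' v hv' x hx))]
          exact hf1 v hv' x hx i
      · have havg : ∀ q, (1 + σ q * S) * ((∑ l, ∑ j ∈ range t, Λ q u j * hitInd t j (tgt q)
            (fun i => if i = 0 then l else f w (i - 1))) / Fintype.card (Fin D)) =
            β q * ∑ j ∈ range t, Λ q u j * hitInd t (j + 1) (tgt q) (f w) := by
          intro q
          rw [sum_comm, Fintype.card_fin]
          simp only [← mul_sum]
          rw [sum_congr rfl (fun j hj => by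
            rw [sum_congr rfl (fun l _ => hitInd_cons (mem_range.1 hj) (tgt q) (f w) l),
              ← sum_mul, sum_ite_eq' univ (tgt q j), if_pos (mem_univ _), one_mul])]
          simp only [β]
          ring
        calc _ = ∑ q, c q * Real.exp (σ q * ∑ v ∈ U.erase u, ∑ j ∈ range t,
              Λ q v j * hitInd t j (tgt q) (f v)) *
              Real.exp (σ q * ∑ j ∈ range t, Λ q u j * hitInd t j (tgt q)
                (fun i => if i = 0 then l else f w (i - 1))) := by
              refine sum_congr rfl fun q _ => ?_
              rw [hsplit, mul_add, Real.exp_add, mul_assoc]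
          _ ≤ _ := hl
          _ = ∑ q, c q * Real.exp (σ q * (β q * Λ q u (t - 1))) * Real.exp (σ q *
              ∑ v ∈ U.erase u, ∑ j ∈ range t, Λ' q v j * hitInd t j (tgt q) (f v)) := by
              refine sum_congr rfl fun q _ => ?_
              rw [havg, mul_assoc, mul_assoc, ← Real.exp_add, ← Real.exp_add, ← mul_add, ← mul_add,
                ← htrans q (fun v j => hitInd t j (tgt q) (f v)) (hitInd_top _ _ _), add_comm]
          _ ≤ _ := hf2
          _ = _ := by
              refine sum_congr rfl fun q _ => ?_
              have e0 : β q * ∑ j ∈ range t, Λ q u j * β q ^ (t - (j + 1)) =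
                  ∑ j ∈ range t, Λ q u j * β q ^ (t - j) := by
                rw [mul_sum]
                refine sum_congr rfl fun j hj => ?_
                have e : t - j = (t - (j + 1)) + 1 := by have := mem_range.1 hj; omega
                rw [e, pow_succ]
                ring
              rw [mul_assoc, ← Real.exp_add, ← mul_add, add_comm,
                htrans q (fun _ j => β q ^ (t - j)) (by simp), e0, ← sum_erase_add _ _ hu]

open Finset in
/-- Given a partition `cl` of the vertices into large classes and a forest of in-degree at most `K`,
there are compatible words over `4 * K` letters that split every class into almost equal parts.
The probability of failure is estimated by exponential moments: upper and lower deviations, for all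
classes and words, are treated simultaneously by `walk_core`. -/
theorem walk_step {V ι : Type} [Fintype V] [DecidableEq V] [Fintype ι] [DecidableEq ι]
    (p : V → Option V) (ρ : V → ℕ) (hρ : ∀ v w, p v = some w → ρ w < ρ v) (K t : ℕ) (hK : 1 ≤ K)
    (ht : 1 ≤ t) (hdeg : ∀ w, (univ.filter (fun v => p v = some w)).card ≤ K) (cl : V → ι)
    (ε T X : ℝ) (hε : 0 < ε) (hε1 : ε ≤ 1) (htT : (t : ℝ) ≤ T)
    (hX : 2 * (Fintype.card ι : ℝ) * ((4 * K : ℕ) : ℝ) ^ t < Real.exp X)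
    (hμ : ∀ i, 16 * T * X / ε ^ 2 ≤
      ((univ.filter (fun v => cl v = i)).card : ℝ) / ((4 * K : ℕ) : ℝ) ^ t) :
    ∃ f : V → ℕ → Fin (4 * K), (∀ v w, p v = some w → ∀ i, f v (i + 1) = f w i) ∧
      ∀ i, ∀ s : Fin t → Fin (4 * K),
        ((univ.filter (fun v => cl v = i ∧ (fun j : Fin t => f v j) = s)).card : ℝ) ≤ (1 + ε) *
          (((univ.filter (fun v => cl v = i)).card : ℝ) / ((4 * K : ℕ) : ℝ) ^ t) ∧
        (1 - ε) * (((univ.filter (fun v => cl v = i)).card : ℝ) / ((4 * K : ℕ) : ℝ) ^ t) ≤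
          ((univ.filter (fun v => cl v = i ∧ (fun j : Fin t => f v j) = s)).card : ℝ) := by
  classical
  have ht1 : (1 : ℝ) ≤ t := by exact_mod_cast ht
  have hT : 1 ≤ T := ht1.trans htT
  have hD : 0 < 4 * K := by omega
  have hKR : (1 : ℝ) ≤ K := by exact_mod_cast hK
  set m : ℝ := ((4 * K : ℕ) : ℝ) ^ t with hm
  have hm0 : 0 < m := by rw [hm]; have : (0 : ℝ) < ((4 * K : ℕ) : ℝ) := by exact_mod_cast hD
                         positivity
  set l : ℝ := ε / (8 * T) with hl
  have hl0 : 0 < l := by rw [hl]; positivity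
  have hlT : l * T = ε / 8 := by rw [hl]; field_simp
  have hlt : l * t ≤ ε / 8 := by rw [← hlT]; exact mul_le_mul_of_nonneg_left htT hl0.le
  have hl1 : l ≤ ε / 8 := le_trans (by nlinarith) hlt
  let Q := ι × (Fin t → Fin (4 * K)) × Bool
  let ext : (Fin t → Fin (4 * K)) → ℕ → Fin (4 * K) :=
    fun b i => if h : i < t then b ⟨i, h⟩ else ⟨0, hD⟩
  let σ : Q → ℝ := fun q => if q.2.2 then 1 else -1
  let μ : ι → ℝ := fun i => ((univ.filter (fun v => cl v = i)).card : ℝ) / m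
  let c : Q → ℝ := fun q => Real.exp (-(σ q * (l * ((1 + σ q * ε) * μ q.1))))
  let Λ : Q → V → ℕ → ℝ := fun q u j => if cl u = q.1 ∧ j = 0 then l else 0
  have hσ : ∀ q, σ q = 1 ∨ σ q = -1 := by
    intro q; simp only [σ]; split_ifs <;> simp
  have hμ0 : ∀ i, 0 ≤ μ i := fun i => by positivity
  have hsumΛ : ∀ q u (G : ℕ → ℝ), ∑ j ∈ range t, Λ q u j * G j =
      if cl u = q.1 then l * G 0 else 0 := by
    intro q u G
    rw [sum_eq_single 0]
    · simp only [Λ, and_true]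
      split_ifs <;> simp
    · intro b _ hb
      simp [Λ, hb]
    · intro h
      exact absurd (mem_range.2 (by omega)) h
  obtain ⟨f, hf1, hf2⟩ := walk_core p ρ hρ (4 * K) t hD ht (2 * l) (by linarith) (by linarith)
    σ hσ (fun q => ext q.2.1) _ univ rfl (fun _ _ _ _ => mem_univ _) c
    (fun q => (Real.exp_pos _).le) Λ (fun q v j => by simp only [Λ]; split_ifs <;> linarith)
    (by
      intro q u _
      have h1 : ∑ j ∈ range t, Λ q u j ≤ l := by
        have := hsumΛ q u (fun _ => 1)
        simp only [mul_one] at this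
        rw [this]; split_ifs <;> linarith
      have h2 : 2 * (2 * l) / ((4 * K : ℕ) : ℝ) * ((univ.filter (fun v => p v = some u)).card : ℝ)
          ≤ 2 * (2 * l) / ((4 * K : ℕ) : ℝ) * K :=
        mul_le_mul_of_nonneg_left (by exact_mod_cast hdeg u) (by positivity)
      have h3 : 2 * (2 * l) / ((4 * K : ℕ) : ℝ) * K = l := by
        push_cast; field_simp; ring
      linarith)
  refine ⟨f, fun v w h i => hf1 v (mem_univ _) w h i, ?_⟩
  have hcnt : ∀ q : Q, ∑ u, ∑ j ∈ range t, Λ q u j * hitInd t j (ext q.2.1) (f u) =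
      l * ((univ.filter (fun v => cl v = q.1 ∧ (fun j : Fin t => f v j) = q.2.1)).card : ℝ) := by
    intro q
    rw [card_filter, Nat.cast_sum, mul_sum]
    refine sum_congr rfl fun u _ => ?_
    rw [hsumΛ q u (fun j => hitInd t j (ext q.2.1) (f u))]
    by_cases h : cl u = q.1
    · simp only [h, if_true, true_and, hitInd, add_zero]
      congr 1
      have : (∀ i < t, f u i = ext q.2.1 i) ↔ (fun j : Fin t => f u j) = q.2.1 := by
        constructor
        · intro H
          funext j
          have := H j j.2
          simpa [ext] using this
        · intro H i hi
          have := congrFun H ⟨i, hi⟩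
          simpa [ext, hi] using this
      simp only [this]
      push_cast
      rfl
    · simp [h]
  have hrhs : ∀ q : Q, c q * Real.exp (σ q * ∑ u, ∑ j ∈ range t,
      Λ q u j * ((1 + σ q * (2 * l)) / ((4 * K : ℕ) : ℝ)) ^ (t - j)) ≤ Real.exp (-X) := by
    intro q
    have e1 : ∑ u, ∑ j ∈ range t, Λ q u j *
        ((1 + σ q * (2 * l)) / ((4 * K : ℕ) : ℝ)) ^ (t - j) =
        l * (μ q.1 * (1 + σ q * (2 * l)) ^ t) := by
      rw [sum_congr rfl (fun u _ => hsumΛ q u (fun j =>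
        ((1 + σ q * (2 * l)) / ((4 * K : ℕ) : ℝ)) ^ (t - j))), ← sum_filter, sum_const,
        nsmul_eq_mul, Nat.sub_zero, div_pow]
      simp only [μ]
      rw [← hm]
      ring
    rw [e1]
    simp only [c]
    rw [← Real.exp_add]
    refine Real.exp_le_exp.2 ?_
    have h1 : X ≤ l * (μ q.1 * (ε / 2)) := by
      have := hμ q.1
      rw [div_le_iff₀ (by positivity)] at this
      have e : l * (μ q.1 * (ε / 2)) = (μ q.1 * ε ^ 2) / (16 * T) := by
        rw [hl]; field_simp; ring
      rw [e, le_div_iff₀ (by positivity)]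
      linarith
    have hlμ : 0 ≤ l * μ q.1 := mul_nonneg hl0.le (hμ0 _)
    rcases hσ q with h | h
    · rw [h]
      have h2 : (1 + 1 * (2 * l)) ^ t ≤ 1 + ε / 2 := by
        have a1 : 1 + 1 * (2 * l) ≤ Real.exp (2 * l) := by
          have := Real.add_one_le_exp (2 * l); linarith
        have a2 : (1 + 1 * (2 * l)) ^ t ≤ Real.exp (2 * l) ^ t :=
          pow_le_pow_left₀ (by linarith) a1 t
        rw [← Real.exp_nat_mul] at a2
        set x := (t : ℝ) * (2 * l) with hx
        have hx0 : 0 ≤ x := by positivity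
        have hx1 : x ≤ ε / 4 := by rw [hx]; linarith
        have a3 := (abs_le.1 (Real.abs_exp_sub_one_sub_id_le (x := x)
          (by rw [abs_of_nonneg hx0]; linarith))).2
        nlinarith
      nlinarith [mul_le_mul_of_nonneg_left h2 hlμ]
    · rw [h]
      have h2 : 1 - ε / 2 ≤ (1 + -1 * (2 * l)) ^ t := by
        have := one_add_mul_le_pow (show (-2 : ℝ) ≤ -1 * (2 * l) by linarith) t
        linarith
      nlinarith [mul_le_mul_of_nonneg_left h2 hlμ]
  have htotal : ∑ q, c q * Real.exp (σ q * ∑ u, ∑ j ∈ range t,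
      Λ q u j * hitInd t j (ext q.2.1) (f u)) < 1 := by
    refine lt_of_le_of_lt (hf2.trans (sum_le_sum fun q _ => hrhs q)) ?_
    rw [sum_const, card_univ, nsmul_eq_mul, Real.exp_neg, ← div_eq_mul_inv,
      div_lt_one (Real.exp_pos _)]
    refine lt_of_eq_of_lt ?_ hX
    simp only [Q, Fintype.card_prod, Fintype.card_fun, Fintype.card_fin, Fintype.card_bool]
    rw [hm]
    push_cast
    ring
  have hone : ∀ q : Q, -(σ q * (l * ((1 + σ q * ε) * μ q.1))) + σ q * (l *
      ((univ.filter (fun v => cl v = q.1 ∧ (fun j : Fin t => f v j) = q.2.1)).card : ℝ)) < 0 := by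
    intro q
    have h1 := single_le_sum (f := fun q => c q * Real.exp (σ q * ∑ u, ∑ j ∈ range t,
      Λ q u j * hitInd t j (ext q.2.1) (f u)))
      (fun q _ => mul_nonneg (Real.exp_pos _).le (Real.exp_pos _).le) (mem_univ q)
    have h2 := lt_of_le_of_lt h1 htotal
    simp only [c, hcnt] at h2
    rw [← Real.exp_add] at h2
    exact Real.exp_lt_one_iff.1 h2
  intro i s
  constructor
  · have := hone (i, s, true)
    simp only [σ, if_true] at this
    have h2 : l * ((univ.filter (fun v => cl v = i ∧ (fun j : Fin t => f v j) = s)).card : ℝ) ≤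
      l * ((1 + ε) * μ i) := by linarith
    exact le_of_mul_le_mul_left h2 hl0
  · have := hone (i, s, false)
    simp only [σ, Bool.false_eq_true, if_false] at this
    have h2 : l * ((1 - ε) * μ i) ≤
      l * ((univ.filter (fun v => cl v = i ∧ (fun j : Fin t => f v j) = s)).card : ℝ) := by linarith
    exact le_of_mul_le_mul_left h2 hl0

open Finset in
/-- Applying `walk_step` to the forests one after another refines the partition `k` times. -/
theorem walk_iterate {V : Type} [Fintype V] [DecidableEq V] (p : ℕ → V → Option V)
    (ρ : ℕ → V → ℕ) (hρ : ∀ c v w, p c v = some w → ρ c w < ρ c v) (K t Δ : ℕ) (hK : 1 ≤ K)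
    (ht : 1 ≤ t) (hdeg : ∀ c w, (univ.filter (fun v => p c v = some w)).card ≤ K)
    (ε T X : ℝ) (hε : 0 < ε) (hε1 : ε ≤ 1) (htT : (t : ℝ) ≤ T)
    (hX : 2 * (((4 * K : ℕ) : ℝ) ^ t) ^ Δ < Real.exp X)
    (hμ : 16 * T * X / ε ^ 2 ≤
      (1 - ε) ^ Δ * ((Fintype.card V : ℝ) / (((4 * K : ℕ) : ℝ) ^ t) ^ Δ)) :
    ∀ k ≤ Δ, ∃ F : ℕ → V → ℕ → Fin (4 * K),
      (∀ c < k, ∀ v w, p c v = some w → ∀ i, F c v (i + 1) = F c w i) ∧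
      ∀ a : Fin k → Fin t → Fin (4 * K),
        ((univ.filter (fun v => (fun (i : Fin k) (j : Fin t) => F i v j) = a)).card : ℝ) ≤
          (1 + ε) ^ k * ((Fintype.card V : ℝ) / (((4 * K : ℕ) : ℝ) ^ t) ^ k) ∧
        (1 - ε) ^ k * ((Fintype.card V : ℝ) / (((4 * K : ℕ) : ℝ) ^ t) ^ k) ≤
          ((univ.filter (fun v => (fun (i : Fin k) (j : Fin t) => F i v j) = a)).card : ℝ) := by
  have hm1 : (1 : ℝ) ≤ ((4 * K : ℕ) : ℝ) ^ t := one_le_pow₀ (by exact_mod_cast (by omega))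
  intro k
  induction k with
  | zero =>
    intro _
    refine ⟨fun _ _ _ => ⟨0, by omega⟩, by simp, fun a => ?_⟩
    have : univ.filter (fun v : V => (fun (_ : Fin 0) (_ : Fin t) =>
        (⟨0, by omega⟩ : Fin (4 * K))) = a) = univ :=
      filter_true_of_mem fun v _ => Subsingleton.elim _ _
    rw [this]
    simp
  | succ k ih =>
    intro hk
    obtain ⟨F, hF1, hF2⟩ := ih (by omega)
    set m : ℝ := ((4 * K : ℕ) : ℝ) ^ t with hm
    obtain ⟨f, hf1, hf2⟩ := walk_step (p k) (ρ k) (hρ k) K t hK ht (hdeg k)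
      (fun v => (fun (i : Fin k) (j : Fin t) => F i v j)) ε T X hε hε1 htT
      (by
        refine lt_of_le_of_lt ?_ hX
        simp only [Fintype.card_fun, Fintype.card_fin]
        push_cast at hm ⊢
        rw [← hm, mul_assoc, ← pow_succ]
        exact mul_le_mul_of_nonneg_left (pow_le_pow_right₀ hm1 hk) (by norm_num))
      (by
        intro a
        refine hμ.trans ?_
        rw [← hm]
        have h1 : (1 - ε) ^ Δ * ((Fintype.card V : ℝ) / m ^ Δ) ≤
            (1 - ε) ^ k * ((Fintype.card V : ℝ) / m ^ (k + 1)) := by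
          refine mul_le_mul (pow_le_pow_of_le_one (by linarith) (by linarith) (by omega)) ?_
            (by positivity) (pow_nonneg (by linarith) _)
          exact div_le_div_of_nonneg_left (by positivity) (by positivity) (pow_le_pow_right₀ hm1 hk)
        refine h1.trans ?_
        rw [pow_succ, ← div_div, ← mul_div_assoc]
        exact div_le_div_of_nonneg_right (hF2 a).2 (by linarith))
    refine ⟨Function.update F k f, ?_, ?_⟩
    · intro c hc v w h i
      by_cases hck : c = k
      · subst hck
        rw [Function.update_self]
        exact hf1 v w h i
      · rw [Function.update_of_ne hck]
        exact hF1 c (by omega) v w h i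
    · intro a
      have hset : univ.filter (fun v => (fun (i : Fin (k + 1)) (j : Fin t) =>
          Function.update F k f i v j) = a) =
          univ.filter (fun v => (fun (i : Fin k) (j : Fin t) => F i v j) =
            (fun i => a i.castSucc) ∧ (fun j : Fin t => f v j) = a (Fin.last k)) := by
        refine filter_congr fun v _ => ?_
        constructor
        · intro h
          constructor
          · funext i j
            have := congrFun (congrFun h i.castSucc) j
            rwa [Fin.val_castSucc, Function.update_of_ne i.2.ne] at this
          · funext j
            have := congrFun (congrFun h (Fin.last k)) j
            rwa [Fin.val_last, Function.update_self] at this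
        · rintro ⟨h1, h2⟩
          funext i j
          refine Fin.lastCases ?_ (fun i => ?_) i
          · rw [Fin.val_last, Function.update_self]
            exact congrFun h2 j
          · rw [Fin.val_castSucc, Function.update_of_ne i.2.ne]
            exact congrFun (congrFun h1 i) j
      rw [hset]
      obtain ⟨h1, h2⟩ := hf2 (fun i => a i.castSucc) (a (Fin.last k))
      obtain ⟨h3, h4⟩ := hF2 (fun i => a i.castSucc)
      have hm0 : 0 < m := by linarith
      constructor
      · refine h1.trans ?_
        rw [pow_succ', mul_assoc]
        refine mul_le_mul_of_nonneg_left ?_ (by linarith)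
        rw [← hm, pow_succ m, ← div_div, ← mul_div_assoc]
        exact div_le_div_of_nonneg_right h3 hm0.le
      · refine le_trans ?_ h2
        rw [pow_succ', mul_assoc]
        refine mul_le_mul_of_nonneg_left ?_ (by linarith)
        rw [← hm, pow_succ m, ← div_div, ← mul_div_assoc]
        exact div_le_div_of_nonneg_right h4 hm0.le

open Finset in
/-- Words for `Δ` forests simultaneously, such that the cells, the sets of vertices with prescribed
words in all coordinates, have almost equal sizes. The number `131072 = 2 * 16 * 64 ^ 2` comes from
the relative error `1 / (64 * Δ)` allowed in each of the `Δ` steps. -/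
theorem walk_all {V : Type} [Fintype V] [DecidableEq V] (Δ K t : ℕ) (hΔ : 1 ≤ Δ)
    (p : Fin Δ → V → Option V) (ρ : Fin Δ → V → ℕ)
    (hρ : ∀ c v w, p c v = some w → ρ c w < ρ c v) (hK : 1 ≤ K)
    (ht : 1 ≤ t) (hdeg : ∀ c w, (univ.filter (fun v => p c v = some w)).card ≤ K)
    (T X : ℝ) (htT : (t : ℝ) ≤ T) (hX0 : 0 ≤ X)
    (hX : 2 * (((4 * K : ℕ) : ℝ) ^ t) ^ Δ < Real.exp X)
    (hμ : 131072 * (Δ : ℝ) ^ 2 * T * X ≤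
      (Fintype.card V : ℝ) / (((4 * K : ℕ) : ℝ) ^ t) ^ Δ) :
    ∃ F : Fin Δ → V → ℕ → Fin (4 * K),
      (∀ c v w, p c v = some w → ∀ i, F c v (i + 1) = F c w i) ∧
      ∀ a : Fin Δ → Fin t → Fin (4 * K),
        ((univ.filter (fun v => (fun (i : Fin Δ) (j : Fin t) => F i v j) = a)).card : ℝ) ≤
          (33 / 32) * ((Fintype.card V : ℝ) / (((4 * K : ℕ) : ℝ) ^ t) ^ Δ) ∧
        (31 / 32) * ((Fintype.card V : ℝ) / (((4 * K : ℕ) : ℝ) ^ t) ^ Δ) ≤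
          ((univ.filter (fun v => (fun (i : Fin Δ) (j : Fin t) => F i v j) = a)).card : ℝ) := by
  have hΔR : (1 : ℝ) ≤ Δ := by exact_mod_cast hΔ
  set ε : ℝ := 1 / (64 * Δ) with hε
  have hε0 : 0 < ε := by rw [hε]; positivity
  have hεΔ : Δ * ε = 1 / 64 := by rw [hε]; field_simp
  have hε1 : ε ≤ 1 := by nlinarith
  have hlow : (31 / 32 : ℝ) ≤ (1 - ε) ^ Δ := by
    have := one_add_mul_le_pow (show (-2 : ℝ) ≤ -ε by linarith) Δ
    rw [← sub_eq_add_neg] at this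
    linarith
  have hup : (1 + ε) ^ Δ ≤ (33 / 32 : ℝ) := by
    have a1 : 1 + ε ≤ Real.exp ε := by have := Real.add_one_le_exp ε; linarith
    have a2 : (1 + ε) ^ Δ ≤ Real.exp ε ^ Δ := pow_le_pow_left₀ (by linarith) a1 Δ
    rw [← Real.exp_nat_mul, hεΔ] at a2
    have a3 := (abs_le.1 (Real.abs_exp_sub_one_sub_id_le (x := (1 / 64 : ℝ))
      (by rw [abs_of_nonneg] <;> norm_num))).2
    linarith
  have hn : 0 ≤ (Fintype.card V : ℝ) / (((4 * K : ℕ) : ℝ) ^ t) ^ Δ := by positivity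
  obtain ⟨F, hF1, hF2⟩ := walk_iterate
    (fun c => if h : c < Δ then p ⟨c, h⟩ else fun _ => none)
    (fun c => if h : c < Δ then ρ ⟨c, h⟩ else fun _ => 0)
    (by
      intro c v w h
      by_cases hc : c < Δ
      · simp only [dif_pos hc] at h ⊢
        exact hρ _ v w h
      · simp [dif_neg hc] at h) K t Δ hK ht
    (by
      intro c w
      by_cases hc : c < Δ
      · simp only [dif_pos hc]
        exact hdeg _ w
      · simp [dif_neg hc]) ε T X hε0 hε1 htT hX
    (by
      refine le_trans ?_ (mul_le_mul_of_nonneg_right hlow hn)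
      have e : 16 * T * X / ε ^ 2 = 65536 * (Δ : ℝ) ^ 2 * T * X := by
        rw [hε]; field_simp; ring
      have hT : 0 ≤ T := le_trans (by positivity) htT
      have : 0 ≤ 65536 * (Δ : ℝ) ^ 2 * T * X := by positivity
      rw [e]
      linarith) Δ le_rfl
  refine ⟨fun c => F c, ?_, ?_⟩
  · intro c v w h i
    exact hF1 c c.2 v w (by simp only [dif_pos c.2]; exact h) i
  · intro a
    obtain ⟨h1, h2⟩ := hF2 a
    exact ⟨h1.trans (mul_le_mul_of_nonneg_right hup hn),
      (mul_le_mul_of_nonneg_right hlow hn).trans h2⟩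

/-! ### Expanding host cells and Hall's theorem -/

open Finset in
/-- Residues modulo the number of cells split `Fin n` into almost equal parts. -/
theorem balanced_map (n : ℕ) (A : Type) [Fintype A] [DecidableEq A] [Nonempty A]
    (hℓ : 32 ≤ (n : ℝ) / Fintype.card A) :
    ∃ c : Fin n → A, ∀ a,
      31 / 32 * ((n : ℝ) / Fintype.card A) ≤ ((univ.filter (fun x => c x = a)).card : ℝ) ∧
      ((univ.filter (fun x => c x = a)).card : ℝ) ≤ 33 / 32 * ((n : ℝ) / Fintype.card A) := by
  set M := Fintype.card A with hM
  have hM0 : 0 < M := Fintype.card_pos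
  have hMR : (0 : ℝ) < M := by exact_mod_cast hM0
  let e : A ≃ Fin M := Fintype.equivFin A
  refine ⟨fun x => e.symm ⟨x % M, Nat.mod_lt _ hM0⟩, fun a => ?_⟩
  have hiff : ∀ x : Fin n, e.symm ⟨x % M, Nat.mod_lt _ hM0⟩ = a ↔ (x : ℕ) % M = e a := by
    intro x
    rw [Equiv.symm_apply_eq, Fin.ext_iff]
  simp only [hiff]
  have hlow : n / M ≤ (univ.filter (fun x : Fin n => (x : ℕ) % M = e a)).card := by
    have hlt : ∀ k : Fin (n / M), (e a : ℕ) + M * k < n := by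
      intro k
      have h1 : (e a : ℕ) < M := (e a).2
      have h2 : M * (k + 1) ≤ M * (n / M) := Nat.mul_le_mul_left _ k.2
      have h3 := Nat.mul_div_le n M
      rw [Nat.mul_add] at h2
      omega
    have := Finset.card_le_card_of_injOn (s := (univ : Finset (Fin (n / M))))
      (t := univ.filter (fun x : Fin n => (x : ℕ) % M = e a))
      (fun k => ⟨(e a : ℕ) + M * k, hlt k⟩)
      (by
        intro k _
        simp [Nat.mod_eq_of_lt (e a).2])
      (by
        intro k _ k' _ h
        simp only [Fin.mk.injEq, Nat.add_left_cancel_iff] at h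
        exact Fin.ext (Nat.eq_of_mul_eq_mul_left hM0 h))
    simpa using this
  have hup : (univ.filter (fun x : Fin n => (x : ℕ) % M = e a)).card ≤ n / M + 1 := by
    have := Finset.card_le_card_of_injOn (t := range (n / M + 1))
      (s := univ.filter (fun x : Fin n => (x : ℕ) % M = e a))
      (fun x => (x : ℕ) / M)
      (by
        intro x _
        simp only [coe_range, Set.mem_Iio]
        exact Nat.lt_succ_of_le (Nat.div_le_div_right x.2.le))
      (by
        intro x hx y hy h
        simp only [coe_filter, mem_univ, true_and, Set.mem_ofPred_eq] at hx hy h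
        refine Fin.ext ?_
        rw [← Nat.div_add_mod (x : ℕ) M, ← Nat.div_add_mod (y : ℕ) M, hx, hy, h])
    simpa using this
  have h1 : (n : ℝ) / M - 1 ≤ ((n / M : ℕ) : ℝ) := by
    have := Nat.lt_div_mul_add (a := n) hM0
    have h : (n : ℝ) < (n / M : ℕ) * M + M := by exact_mod_cast this
    rw [sub_le_iff_le_add, div_le_iff₀ hMR]
    linarith
  have h2 : ((n / M : ℕ) : ℝ) ≤ (n : ℝ) / M := Nat.cast_div_le
  have h3 : ((n / M : ℕ) : ℝ) ≤ ((univ.filter (fun x : Fin n => (x : ℕ) % M = e a)).card : ℝ) := by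
    exact_mod_cast hlow
  have h4 : ((univ.filter (fun x : Fin n => (x : ℕ) % M = e a)).card : ℝ) ≤ (n / M : ℕ) + 1 := by
    exact_mod_cast hup
  constructor <;> linarith

/-- Exponential moments of sums of independent variables factorise. -/
theorem sum_exp_sum {X A : Type} [Fintype X] [DecidableEq X] [Fintype A] (φ : X → A → ℝ) :
    ∑ y : X → A, Real.exp (∑ x, φ x (y x)) = ∏ x, ∑ a, Real.exp (φ x a) := by
  rw [Fintype.prod_sum]
  simp only [Real.exp_sum]

open Finset in
theorem sum_exp_indicator {A : Type} [Fintype A] [DecidableEq A] (S : Finset A) (θ : ℝ) :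
    ∑ a, Real.exp (if a ∈ S then θ else 0) ≤
      Fintype.card A * Real.exp ((Real.exp θ - 1) * (S.card / Fintype.card A)) := by
  by_cases hA : Fintype.card A = 0
  · have := Fintype.card_eq_zero_iff.1 hA
    simp
  have hM : (0 : ℝ) < Fintype.card A := by exact_mod_cast Nat.pos_of_ne_zero hA
  have h1 : ∀ a, Real.exp (if a ∈ S then θ else 0) = 1 + if a ∈ S then Real.exp θ - 1 else 0 := by
    intro a
    split_ifs <;> simp
  simp only [h1]
  rw [sum_add_distrib, ← sum_filter, sum_const, sum_const, filter_mem_eq_inter, univ_inter,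
    card_univ, nsmul_eq_mul, nsmul_eq_mul, mul_one]
  have h2 := Real.add_one_le_exp ((Real.exp θ - 1) * (S.card / Fintype.card A))
  have h3 := mul_le_mul_of_nonneg_left h2 hM.le
  refine le_trans (le_of_eq ?_) h3
  field_simp
  ring

open Finset in
/-- Exponential moment of the number of vertices outside `S` that a uniformly random map `y` sends
into `S`. -/
theorem average_boundary {X A : Type} [Fintype X] [DecidableEq X] [Fintype A] [DecidableEq A]
    (c : X → A) (S : Finset A) :
    ∑ y : X → A, Real.exp (-((univ.filter (fun x => c x ∉ S ∧ y x ∈ S)).card : ℝ)) ≤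
      (Fintype.card A : ℝ) ^ Fintype.card X * Real.exp (-(3 / 5) * (S.card / Fintype.card A) *
        (univ.filter (fun x => c x ∉ S)).card) := by
  have h1 : ∀ y : X → A, -((univ.filter (fun x => c x ∉ S ∧ y x ∈ S)).card : ℝ) =
      ∑ x, (fun x a => if c x ∉ S then (if a ∈ S then (-1 : ℝ) else 0) else 0) x (y x) := by
    intro y
    rw [card_filter, Nat.cast_sum, ← sum_neg_distrib]
    refine sum_congr rfl fun x _ => ?_
    by_cases h : c x ∈ S <;> by_cases h' : y x ∈ S <;> simp [h, h']
  simp only [h1]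
  rw [sum_exp_sum (fun x a => if c x ∉ S then (if a ∈ S then (-1 : ℝ) else 0) else 0)]
  have h2 : ∀ x, ∑ a, Real.exp (if c x ∉ S then (if a ∈ S then (-1 : ℝ) else 0) else 0) ≤
      Fintype.card A * Real.exp (if c x ∉ S then -(3 / 5) * (S.card / Fintype.card A) else 0) := by
    intro x
    by_cases h : c x ∈ S
    · simp [h]
    · simp only [h, not_false_eq_true, if_true]
      refine (sum_exp_indicator S (-1)).trans ?_
      refine mul_le_mul_of_nonneg_left (Real.exp_le_exp.2 ?_) (by positivity)
      refine mul_le_mul_of_nonneg_right ?_ (by positivity)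
      have := Real.exp_neg_one_lt_d9
      linarith
  refine (prod_le_prod (fun x _ => sum_nonneg fun a _ => (Real.exp_pos _).le)
    (fun x _ => h2 x)).trans ?_
  rw [prod_mul_distrib, prod_const, card_univ, ← Real.exp_sum, ← sum_filter, sum_const,
    nsmul_eq_mul, mul_comm ((univ.filter (fun x => c x ∉ S)).card : ℝ)]

open Finset in
/-- Exponential moment of the size of a fibre of a uniformly random map. -/
theorem average_fibre {X A : Type} [Fintype X] [DecidableEq X] [Fintype A] [DecidableEq A]
    (a : A) :
    ∑ y : X → A, Real.exp ((univ.filter (fun x => y x = a)).card : ℝ) ≤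
      (Fintype.card A : ℝ) ^ Fintype.card X * Real.exp (2 * (Fintype.card X / Fintype.card A)) := by
  have h1 : ∀ y : X → A, ((univ.filter (fun x => y x = a)).card : ℝ) =
      ∑ x, (fun _ b => if b ∈ ({a} : Finset A) then (1 : ℝ) else 0) x (y x) := by
    intro y
    rw [card_filter, Nat.cast_sum]
    refine sum_congr rfl fun x _ => ?_
    by_cases h : y x = a <;> simp [h]
  simp only [h1]
  rw [sum_exp_sum (fun (_ : X) b => if b ∈ ({a} : Finset A) then (1 : ℝ) else 0)]
  have h2 : ∀ x : X, ∑ b, Real.exp (if b ∈ ({a} : Finset A) then (1 : ℝ) else 0) ≤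
      Fintype.card A * Real.exp (2 / Fintype.card A) := by
    intro x
    refine (sum_exp_indicator {a} 1).trans ?_
    refine mul_le_mul_of_nonneg_left (Real.exp_le_exp.2 ?_) (by positivity)
    rw [card_singleton, Nat.cast_one, mul_one_div]
    refine div_le_div_of_nonneg_right ?_ (by positivity)
    have := Real.exp_one_lt_d9
    linarith
  refine (prod_le_prod (fun x _ => sum_nonneg fun a _ => (Real.exp_pos _).le)
    (fun x _ => h2 x)).trans (le_of_eq ?_)
  rw [prod_mul_distrib, prod_const, prod_const, card_univ, ← Real.exp_nat_mul]
  congr 2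
  ring

open Finset in
/-- Every host vertex `x` is assigned two cells: `c x` from a balanced map and `y x` at random. The
bipartite incidence structure then expands: for every set `S` of cells, many vertices are put into
`S` by `y` but not by `c`. -/
theorem host_exists (n : ℕ) (A : Type) [Fintype A] [DecidableEq A] [Nonempty A]
    (hℓ : 32 ≤ (n : ℝ) / Fintype.card A)
    (hM : (Fintype.card A : ℝ) * Real.exp (-((n : ℝ) / Fintype.card A / 16)) ≤ 1 / 8) :
    ∃ c y : Fin n → A,
      (∀ a, 31 / 32 * ((n : ℝ) / Fintype.card A) ≤ ((univ.filter (fun x => c x = a)).card : ℝ) ∧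
        ((univ.filter (fun x => c x = a)).card : ℝ) ≤ 33 / 32 * ((n : ℝ) / Fintype.card A)) ∧
      (∀ a, ((univ.filter (fun x => y x = a)).card : ℝ) ≤ 4 * ((n : ℝ) / Fintype.card A)) ∧
      ∀ S : Finset A, S ≠ ∅ → S ≠ univ →
        (n : ℝ) / Fintype.card A / 16 * min (S.card : ℝ) (Fintype.card A - S.card) ≤
          ((univ.filter (fun x => c x ∉ S ∧ y x ∈ S)).card : ℝ) := by
  obtain ⟨c, hc⟩ := balanced_map n A hℓ
  have hM0 : 0 < Fintype.card A := Fintype.card_pos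
  set M := Fintype.card A with hMdef
  have hMR : (1 : ℝ) ≤ M := by exact_mod_cast hM0
  set ℓ : ℝ := (n : ℝ) / M with hℓdef
  let B : Finset (Finset A) := univ.filter (fun S => S ≠ ∅ ∧ S ≠ univ)
  let mn : Finset A → ℝ := fun S => min (S.card : ℝ) (M - S.card)
  let bd : (Fin n → A) → Finset A → ℝ :=
    fun y S => ((univ.filter (fun x => c x ∉ S ∧ y x ∈ S)).card : ℝ)
  let fb : (Fin n → A) → A → ℝ := fun y a => ((univ.filter (fun x => y x = a)).card : ℝ)
  set z : ℝ := Real.exp (-(ℓ / 16)) with hz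
  have hz0 : 0 < z := Real.exp_pos _
  have hcardle : ∀ S : Finset A, (S.card : ℝ) ≤ M := fun S => by
    exact_mod_cast card_le_univ S
  have hzz : (1 + z) ^ M - 1 ≤ 1 / 4 := by
    have a1 : 1 + z ≤ Real.exp z := by have := Real.add_one_le_exp z; linarith
    have a2 : (1 + z) ^ M ≤ Real.exp z ^ M := pow_le_pow_left₀ (by linarith) a1 M
    rw [← Real.exp_nat_mul] at a2
    have hx0 : 0 ≤ (M : ℝ) * z := by positivity
    have a3 := (abs_le.1 (Real.abs_exp_sub_one_sub_id_le (x := (M : ℝ) * z)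
      (by rw [abs_of_nonneg hx0]; linarith))).2
    nlinarith
  have hsum1 : ∑ S ∈ B, z ^ S.card ≤ 1 / 4 := by
    have h1 : ∑ S : Finset A, z ^ S.card = (1 + z) ^ M := by
      have := Finset.sum_pow_mul_eq_add_pow z 1 (univ : Finset A)
      simp only [one_pow, mul_one, powerset_univ, card_univ] at this
      rw [this, add_comm]
    have h2 : ∑ S ∈ B, z ^ S.card ≤ ∑ S ∈ univ.erase (∅ : Finset A), z ^ S.card := by
      refine sum_le_sum_of_subset_of_nonneg ?_ (fun _ _ _ => by positivity)
      intro S hS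
      exact mem_erase.2 ⟨(mem_filter.1 hS).2.1, mem_univ _⟩
    have h3 := sum_erase_add univ (fun S : Finset A => z ^ S.card) (mem_univ ∅)
    simp only [card_empty, pow_zero] at h3
    linarith
  have hsum2 : ∑ S ∈ B, z ^ (M - S.card) ≤ 1 / 4 := by
    refine le_trans (le_of_eq ?_) hsum1
    refine sum_bij' (fun S _ => Sᶜ) (fun S _ => Sᶜ) ?_ ?_ ?_ ?_ ?_
    · intro S hS
      have := (mem_filter.1 hS).2
      exact mem_filter.2 ⟨mem_univ _, by simpa using this.2, by simpa using this.1⟩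
    · intro S hS
      have := (mem_filter.1 hS).2
      exact mem_filter.2 ⟨mem_univ _, by simpa using this.2, by simpa using this.1⟩
    · simp
    · simp
    · intro S _
      rw [card_compl]
  have hbd : ∀ S ∈ B, ∑ y, Real.exp (ℓ / 16 * mn S - bd y S) ≤
      (M : ℝ) ^ n * (z ^ S.card + z ^ (M - S.card)) := by
    intro S hS
    have h1 := average_boundary c S
    rw [Fintype.card_fin] at h1
    have hout : 31 / 32 * ℓ * (M - S.card) ≤ ((univ.filter (fun x => c x ∉ S)).card : ℝ) := by
      have e : (univ.filter (fun x => c x ∉ S)).card =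
          ∑ a ∈ Sᶜ, (univ.filter (fun x => c x = a)).card := by
        rw [card_eq_sum_card_fiberwise (f := c) (t := Sᶜ) (by intro x hx; simpa using hx)]
        refine sum_congr rfl fun a ha => ?_
        rw [filter_filter]
        congr 1
        refine filter_congr fun x _ => ?_
        rw [mem_compl] at ha
        constructor
        · exact fun h => h.2
        · rintro rfl; exact ⟨ha, rfl⟩
      rw [e, Nat.cast_sum]
      have : ∑ _a ∈ Sᶜ, 31 / 32 * ℓ ≤ ∑ a ∈ Sᶜ, ((univ.filter (fun x => c x = a)).card : ℝ) :=
        sum_le_sum fun a _ => (hc a).1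
      rw [sum_const, nsmul_eq_mul, card_compl, Nat.cast_sub (card_le_univ S)] at this
      linarith
    have hℓ0 : 0 ≤ ℓ := by linarith
    have hmn0 : 0 ≤ mn S := le_min (by positivity) (by have := hcardle S; linarith)
    have hprod : M / 2 * mn S ≤ S.card * (M - S.card) := by
      have hk := hcardle S
      have hk0 : (0 : ℝ) ≤ S.card := by positivity
      rcases le_total ((S.card : ℝ)) (M - S.card) with h | h
      · have : mn S = S.card := min_eq_left h
        rw [this]; nlinarith
      · have : mn S = M - S.card := min_eq_right h
        rw [this]; nlinarith
    have h2 : ∀ y, Real.exp (ℓ / 16 * mn S - bd y S) =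
        Real.exp (ℓ / 16 * mn S) * Real.exp (-bd y S) := by
      intro y; rw [← Real.exp_add, sub_eq_add_neg]
    simp only [h2]
    rw [← mul_sum]
    refine (mul_le_mul_of_nonneg_left h1 (Real.exp_pos _).le).trans ?_
    rw [mul_left_comm, ← Real.exp_add]
    refine mul_le_mul_of_nonneg_left ?_ (by positivity)
    have h3 : ℓ / 16 * mn S + -(3 / 5) * ((S.card : ℝ) / M) *
        (univ.filter (fun x => c x ∉ S)).card ≤ -(ℓ / 16) * mn S := by
      have e1 : (3 / 5) * ((S.card : ℝ) / M) * (31 / 32 * ℓ * (M - S.card)) ≤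
          (3 / 5) * ((S.card : ℝ) / M) * (univ.filter (fun x => c x ∉ S)).card :=
        mul_le_mul_of_nonneg_left hout (by positivity)
      have e2 : (3 / 5) * (31 / 32) * ℓ * (mn S / 2) ≤
          (3 / 5) * ((S.card : ℝ) / M) * (31 / 32 * ℓ * (M - S.card)) := by
        have : mn S / 2 ≤ (S.card : ℝ) * (M - S.card) / M := by
          rw [le_div_iff₀ (by linarith)]; linarith
        have h5 := mul_le_mul_of_nonneg_left this (show 0 ≤ (3 / 5) * (31 / 32) * ℓ by positivity)
        refine h5.trans (le_of_eq ?_)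
        ring
      nlinarith [mul_nonneg hℓ0 hmn0]
    refine (Real.exp_le_exp.2 h3).trans ?_
    rcases le_total ((S.card : ℝ)) (M - S.card) with h | h
    · have : mn S = S.card := min_eq_left h
      rw [this, mul_comm, Real.exp_nat_mul]
      have : 0 ≤ z ^ (M - S.card) := by positivity
      linarith
    · have : mn S = ((M - S.card : ℕ) : ℝ) := by
        rw [Nat.cast_sub (card_le_univ S)]; exact min_eq_right h
      rw [this, mul_comm, Real.exp_nat_mul]
      have : 0 ≤ z ^ S.card := by positivity
      linarith
  have hfb : ∀ a, ∑ y, Real.exp (fb y a - 4 * ℓ) ≤ (M : ℝ) ^ n * z := by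
    intro a
    have h1 := average_fibre (X := Fin n) a
    rw [Fintype.card_fin] at h1
    have h2 : ∀ y, Real.exp (fb y a - 4 * ℓ) = Real.exp (-(4 * ℓ)) * Real.exp (fb y a) := by
      intro y; rw [← Real.exp_add]; congr 1; ring
    simp only [h2]
    rw [← mul_sum]
    refine (mul_le_mul_of_nonneg_left h1 (Real.exp_pos _).le).trans ?_
    rw [mul_left_comm, ← Real.exp_add]
    refine mul_le_mul_of_nonneg_left (Real.exp_le_exp.2 ?_) (by positivity)
    linarith
  -- first moment method: the total weight of all failures is below one on average
  have htot : ∑ y, (∑ S ∈ B, Real.exp (ℓ / 16 * mn S - bd y S) +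
      ∑ a, Real.exp (fb y a - 4 * ℓ)) < ∑ _y : Fin n → A, (1 : ℝ) := by
    rw [sum_add_distrib, sum_comm, sum_comm (s := (univ : Finset (Fin n → A))) (t := univ (α := A))]
    have h1 := sum_le_sum hbd
    have h2 := sum_le_sum (fun a (_ : a ∈ univ) => hfb a)
    rw [← mul_sum, sum_add_distrib] at h1
    rw [sum_const, card_univ, nsmul_eq_mul] at h2
    have hMn : 0 < (M : ℝ) ^ n := by positivity
    have h3 : (M : ℝ) ^ n * (∑ S ∈ B, z ^ S.card + ∑ S ∈ B, z ^ (M - S.card)) ≤ M ^ n * (1 / 2) :=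
      mul_le_mul_of_nonneg_left (by linarith) hMn.le
    have h4 : (M : ℝ) * (M ^ n * z) ≤ M ^ n * (1 / 8) := by
      rw [mul_left_comm]; exact mul_le_mul_of_nonneg_left hM hMn.le
    have h5 : ∑ _y : Fin n → A, (1 : ℝ) = (M : ℝ) ^ n := by
      rw [sum_const, card_univ, Fintype.card_fun, Fintype.card_fin, nsmul_eq_mul, mul_one]
      push_cast; rfl
    rw [h5]
    linarith
  obtain ⟨y, -, hy⟩ := exists_lt_of_sum_lt htot
  refine ⟨c, y, hc, ?_, ?_⟩
  · intro a
    have h1 := single_le_sum (f := fun a => Real.exp (fb y a - 4 * ℓ))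
      (fun a _ => (Real.exp_pos _).le) (mem_univ a)
    have h2 : 0 ≤ ∑ S ∈ B, Real.exp (ℓ / 16 * mn S - bd y S) :=
      sum_nonneg fun _ _ => (Real.exp_pos _).le
    have h3 : Real.exp (fb y a - 4 * ℓ) < 1 := by
      linarith
    have := Real.exp_lt_one_iff.1 h3
    have h4 : fb y a < 4 * ℓ := by linarith
    exact h4.le
  · intro S hS1 hS2
    have h1 := single_le_sum (f := fun S => Real.exp (ℓ / 16 * mn S - bd y S))
      (fun a _ => (Real.exp_pos _).le) (mem_filter.2 ⟨mem_univ S, hS1, hS2⟩ : S ∈ B)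
    have h2 : 0 ≤ ∑ a, Real.exp (fb y a - 4 * ℓ) :=
      sum_nonneg fun _ _ => (Real.exp_pos _).le
    have h3 : Real.exp (ℓ / 16 * mn S - bd y S) < 1 := by
      linarith
    have := Real.exp_lt_one_iff.1 h3
    have h4 : ℓ / 16 * mn S < bd y S := by linarith
    exact h4.le

open Finset in
/-- Hall's condition for embedding vertices with prescribed, almost balanced cells into the host: the
expansion provided by `y` outweighs the imbalance of `c` and of `cell`. -/
theorem hall_embedding (n : ℕ) (A : Type) [Fintype A] [DecidableEq A] (ℓ : ℝ)
    (c y cell : Fin n → A)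
    (hc : ∀ a, 31 / 32 * ℓ ≤ ((univ.filter (fun x => c x = a)).card : ℝ) ∧
        ((univ.filter (fun x => c x = a)).card : ℝ) ≤ 33 / 32 * ℓ)
    (hcell : ∀ a, ((univ.filter (fun x => cell x = a)).card : ℝ) ≤ 33 / 32 * ℓ ∧
        31 / 32 * ℓ ≤ ((univ.filter (fun x => cell x = a)).card : ℝ))
    (hexp : ∀ S : Finset A, S ≠ ∅ → S ≠ univ →
        ℓ / 16 * min (S.card : ℝ) (Fintype.card A - S.card) ≤
          ((univ.filter (fun x => c x ∉ S ∧ y x ∈ S)).card : ℝ)) :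
    ∃ φ : Fin n → Fin n, Function.Injective φ ∧ ∀ v, c (φ v) = cell v ∨ y (φ v) = cell v := by
  have hpre : ∀ (g : Fin n → A) (S : Finset A), ((univ.filter (fun x => g x ∈ S)).card : ℝ) =
      ∑ a ∈ S, ((univ.filter (fun x => g x = a)).card : ℝ) := by
    intro g S
    rw [card_eq_sum_card_fiberwise (f := g) (t := S) (by intro x hx; simpa using hx), Nat.cast_sum]
    refine sum_congr rfl fun a ha => ?_
    rw [filter_filter]
    congr 2
    refine filter_congr fun x _ => ?_
    constructor
    · exact fun h => h.2
    · rintro rfl; exact ⟨ha, rfl⟩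
  have hcompl : ∀ (g : Fin n → A) (S : Finset A), ((univ.filter (fun x => g x ∈ S)).card : ℝ) =
      n - ((univ.filter (fun x => g x ∈ Sᶜ)).card : ℝ) := by
    intro g S
    have := card_filter_add_card_filter_not (s := (univ : Finset (Fin n))) (fun x => g x ∈ S)
    simp only [card_univ, Fintype.card_fin] at this
    simp only [mem_compl]
    have h : ((univ.filter (fun x => g x ∈ S)).card : ℝ) +
      ((univ.filter (fun x => g x ∉ S)).card : ℝ) = n := by exact_mod_cast this
    linarith
  have hup : ∀ (g : Fin n → A) (S : Finset A) (b : ℝ),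
      (∀ a, ((univ.filter (fun x => g x = a)).card : ℝ) ≤ b) →
      ((univ.filter (fun x => g x ∈ S)).card : ℝ) ≤ S.card * b := by
    intro g S b h
    rw [hpre]
    have := sum_le_sum (fun a (_ : a ∈ S) => h a)
    rwa [sum_const, nsmul_eq_mul] at this
  have hlow : ∀ (g : Fin n → A) (S : Finset A) (b : ℝ),
      (∀ a, b ≤ ((univ.filter (fun x => g x = a)).card : ℝ)) →
      S.card * b ≤ ((univ.filter (fun x => g x ∈ S)).card : ℝ) := by
    intro g S b h
    rw [hpre]
    have := sum_le_sum (fun a (_ : a ∈ S) => h a)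
    rwa [sum_const, nsmul_eq_mul] at this
  have hmain : ∀ S : Finset A, (univ.filter (fun v => cell v ∈ S)).card ≤
      (univ.filter (fun x => c x ∈ S ∨ y x ∈ S)).card := by
    intro S
    by_cases h0 : S = ∅
    · subst h0; simp
    by_cases h1 : S = univ
    · subst h1; simp
    have e1 : (univ.filter (fun x => c x ∈ S ∨ y x ∈ S)).card =
        (univ.filter (fun x => c x ∈ S)).card +
          (univ.filter (fun x => c x ∉ S ∧ y x ∈ S)).card := by
      rw [← card_union_of_disjoint]
      · congr 1
        ext x
        simp only [mem_filter, mem_union, mem_univ, true_and]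
        tauto
      · rw [disjoint_filter]
        intro x _ h h'
        exact h'.1 h
    rw [e1]
    have h2 := hexp S h0 h1
    have hgoal : ((univ.filter (fun v => cell v ∈ S)).card : ℝ) ≤
        ((univ.filter (fun x => c x ∈ S)).card : ℝ) +
          ((univ.filter (fun x => c x ∉ S ∧ y x ∈ S)).card : ℝ) := by
      rcases le_total ((S.card : ℝ)) (Fintype.card A - S.card) with h | h
      · rw [min_eq_left h] at h2
        have a1 := hup cell S _ (fun a => (hcell a).1)
        have a2 := hlow c S _ (fun a => (hc a).1)
        linarith
      · rw [min_eq_right h] at h2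
        have a1 := hlow cell Sᶜ _ (fun a => (hcell a).2)
        have a2 := hup c Sᶜ _ (fun a => (hc a).2)
        rw [hcompl cell S, hcompl c S]
        rw [card_compl, Nat.cast_sub (card_le_univ S)] at a1 a2
        linarith
    exact_mod_cast hgoal
  have hall : ∀ W : Finset (Fin n), W.card ≤
      (W.biUnion (fun v => univ.filter (fun x => c x = cell v ∨ y x = cell v))).card := by
    intro W
    have h1 : W ⊆ univ.filter (fun v => cell v ∈ W.image cell) := by
      intro v hv
      exact mem_filter.2 ⟨mem_univ _, mem_image_of_mem _ hv⟩
    refine (card_le_card h1).trans ((hmain _).trans (card_le_card ?_))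
    intro x hx
    simp only [mem_filter, mem_univ, true_and, mem_image, mem_biUnion] at hx ⊢
    rcases hx with ⟨v, hv, h⟩ | ⟨v, hv, h⟩
    · exact ⟨v, hv, Or.inl h.symm⟩
    · exact ⟨v, hv, Or.inr h.symm⟩
  obtain ⟨φ, hφ, hφm⟩ := (Finset.all_card_le_biUnion_card_iff_exists_injective _).1 hall
  refine ⟨φ, hφ, fun v => ?_⟩
  have := hφm v
  simpa using this

/-! ### Overlapping words and adjacent cells -/

/-- The word `b` continues the word `a` after `δ` steps: the letters of `a` from position `δ` on
form a prefix of `b`. -/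
def ShiftRel {t D : ℕ} (δ : ℕ) (a b : Fin t → Fin D) : Prop :=
  ∀ i j : Fin t, (j : ℕ) = i + δ → a j = b i

/-- Two words of length `t` are related if one continues the other after at most two steps. -/
def WordRel {t D : ℕ} (a b : Fin t → Fin D) : Prop :=
  ∃ δ : Fin 3, ShiftRel δ a b ∨ ShiftRel δ b a

theorem WordRel.symm {t D : ℕ} {a b : Fin t → Fin D} (h : WordRel a b) : WordRel b a := by
  obtain ⟨δ, h⟩ := h
  exact ⟨δ, h.symm⟩

/-- Words along a forest in which each vertex prefixes a letter to the word of its parent are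
related at near vertices. -/
theorem Near.wordRel {V : Type} {p : V → Option V} {t D : ℕ} {f : V → ℕ → Fin D}
    (hf : ∀ v w, p v = some w → ∀ i, f v (i + 1) = f w i) {v w : V} (h : Near p v w) :
    WordRel (fun i : Fin t => f v i) (fun i : Fin t => f w i) := by
  rcases h with rfl | h | h | ⟨u, h, h'⟩ | ⟨u, h, h'⟩
  · exact ⟨0, Or.inl fun i j hij => by simp [hij]⟩
  · refine ⟨1, Or.inl fun i j hij => ?_⟩
    have : (j : ℕ) = i + 1 := hij
    simp only [this]
    exact hf v w h i
  · refine ⟨1, Or.inr fun i j hij => ?_⟩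
    have : (j : ℕ) = i + 1 := hij
    simp only [this]
    exact hf w v h i
  · refine ⟨2, Or.inl fun i j hij => ?_⟩
    have : (j : ℕ) = i + 1 + 1 := hij
    simp only [this]
    rw [hf v u h, hf u w h']
  · refine ⟨2, Or.inr fun i j hij => ?_⟩
    have : (j : ℕ) = i + 1 + 1 := hij
    simp only [this]
    rw [hf w u h, hf u v h']

open Finset in
open Classical in
/-- All but the last two letters of `b` are determined by `a`. -/
theorem card_shiftRel_left {t D δ : ℕ} (ht : 1 ≤ t) (hδ : δ ≤ 2) (a : Fin t → Fin D) :
    (univ.filter (fun b => ShiftRel δ a b)).card ≤ D ^ 2 := by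
  have := Finset.card_le_card_of_injOn (s := univ.filter (fun b => ShiftRel δ a b))
    (t := (univ : Finset (Fin 2 → Fin D))) (fun b k => b ⟨t - 1 - k, by omega⟩)
    (fun _ _ => by simp)
    (by
      intro b hb b' hb' h
      simp only [coe_filter, mem_univ, true_and, Set.mem_ofPred_eq] at hb hb'
      funext i
      by_cases hi : i + δ < t
      · rw [← hb i ⟨i + δ, hi⟩ rfl, ← hb' i ⟨i + δ, hi⟩ rfl]
      · have hk : t - 1 - i < 2 := by have := i.2; omega
        have := congrFun h ⟨t - 1 - i, hk⟩
        have e : (⟨t - 1 - (t - 1 - i), by omega⟩ : Fin t) = i := Fin.ext (by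
          have := i.2
          show t - 1 - (t - 1 - (i : ℕ)) = i
          omega)
        simp only [e] at this
        exact this)
  simpa using this

open Finset in
open Classical in
/-- All but the first two letters of `b` are determined by `a`. -/
theorem card_shiftRel_right {t D δ : ℕ} (ht : 1 ≤ t) (hδ : δ ≤ 2) (a : Fin t → Fin D) :
    (univ.filter (fun b => ShiftRel δ b a)).card ≤ D ^ 2 := by
  have := Finset.card_le_card_of_injOn (s := univ.filter (fun b => ShiftRel δ b a))
    (t := (univ : Finset (Fin 2 → Fin D))) (fun b k => b ⟨min k (t - 1), by omega⟩)
    (fun _ _ => by simp)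
    (by
      intro b hb b' hb' h
      simp only [coe_filter, mem_univ, true_and, Set.mem_ofPred_eq] at hb hb'
      funext i
      have hit := i.2
      by_cases hi : δ ≤ i
      · rw [hb ⟨i - δ, by omega⟩ i (by simp; omega), hb' ⟨i - δ, by omega⟩ i (by simp; omega)]
      · have := congrFun h ⟨i, by omega⟩
        have e : (⟨min (i : ℕ) (t - 1), by omega⟩ : Fin t) = i := Fin.ext (by
          show min (i : ℕ) (t - 1) = i
          omega)
        simp only [e] at this
        exact this)
  simpa using this

open Finset in
open Classical in
theorem card_wordRel {t D : ℕ} (ht : 1 ≤ t) (a : Fin t → Fin D) :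
    (univ.filter (fun b => WordRel a b)).card ≤ 6 * D ^ 2 := by
  have hsub : univ.filter (fun b => WordRel a b) ⊆ (univ : Finset (Fin 3)).biUnion
      (fun δ => univ.filter (fun b => ShiftRel δ a b) ∪ univ.filter (fun b => ShiftRel δ b a)) := by
    intro b hb
    simp only [mem_filter, mem_univ, true_and] at hb
    obtain ⟨δ, h⟩ := hb
    simp only [mem_biUnion, mem_univ, true_and, mem_union, mem_filter]
    exact ⟨δ, h⟩
  refine (card_le_card hsub).trans (card_biUnion_le.trans ?_)
  refine (sum_le_card_nsmul _ _ (2 * D ^ 2) fun δ _ => ?_).trans (by simp; omega)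
  refine (card_union_le _ _).trans ?_
  have h1 := card_shiftRel_left ht (Nat.lt_succ_iff.1 δ.2) a
  have h2 := card_shiftRel_right ht (Nat.lt_succ_iff.1 δ.2) a
  omega

/-- Two cells, each a `Δ`-tuple of words, are adjacent if their words are related in two different
coordinates. -/
def Adj {Δ t D : ℕ} (a a' : Fin Δ → Fin t → Fin D) : Prop :=
  ∃ i j, i ≠ j ∧ WordRel (a i) (a' i) ∧ WordRel (a j) (a' j)

open Finset in
open Classical in
theorem card_adj {Δ t D : ℕ} (ht : 1 ≤ t) (a : Fin Δ → Fin t → Fin D) :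
    (univ.filter (fun b => Adj a b)).card ≤ Δ ^ 2 * ((6 * D ^ 2) ^ 2 * (D ^ t) ^ (Δ - 2)) := by
  have hsub : univ.filter (fun b => Adj a b) ⊆
      ((univ : Finset (Fin Δ × Fin Δ)).filter (fun q => q.1 ≠ q.2)).biUnion
      (fun q => Fintype.piFinset fun k =>
        if k = q.1 ∨ k = q.2 then univ.filter (fun b => WordRel (a k) b) else univ) := by
    intro b hb
    simp only [mem_filter, mem_univ, true_and] at hb
    obtain ⟨i, j, hij, h, h'⟩ := hb
    simp only [mem_biUnion, mem_filter, mem_univ, true_and, Fintype.mem_piFinset]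
    refine ⟨(i, j), hij, fun k => ?_⟩
    split_ifs with hk
    · rcases hk with rfl | rfl <;> simp [h, h']
    · simp
  refine (card_le_card hsub).trans (card_biUnion_le.trans ?_)
  refine (sum_le_card_nsmul _ _ ((6 * D ^ 2) ^ 2 * (D ^ t) ^ (Δ - 2)) fun q hq => ?_).trans ?_
  · have hq' : q.1 ≠ q.2 := (mem_filter.1 hq).2
    rw [Fintype.card_piFinset]
    have hpair : ({q.1, q.2} : Finset (Fin Δ)) ⊆ univ := subset_univ _
    rw [← prod_sdiff hpair, prod_pair hq', mul_comm]
    refine Nat.mul_le_mul ?_ ?_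
    · rw [if_pos (Or.inl rfl), if_pos (Or.inr rfl), sq]
      exact Nat.mul_le_mul (card_wordRel ht _) (card_wordRel ht _)
    · rw [prod_congr rfl (g := fun _ => D ^ t)]
      · rw [prod_const, card_sdiff_of_subset hpair, card_pair hq']; simp
      · intro k hk
        have : ¬ (k = q.1 ∨ k = q.2) := by simpa using hk
        rw [if_neg this]; simp
  · rw [smul_eq_mul]
    refine Nat.mul_le_mul_right _ ((card_filter_le _ _).trans ?_)
    simp [sq]

/-! ### The host hypergraph -/

open Finset in
open Classical in
/-- Pairs of vertices of the host lying in related cells; a vertex `x` belongs to the cells `c x`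
and `y x`. -/
noncomputable def cellPairs {n : ℕ} {A : Type} (R : A → A → Prop) (c y : Fin n → A) :
    Finset (Fin n × Fin n) :=
  univ.filter fun q => ∃ a a', (c q.1 = a ∨ y q.1 = a) ∧ (c q.2 = a' ∨ y q.2 = a') ∧ R a a'

theorem mem_cellPairs {n : ℕ} {A : Type} {R : A → A → Prop} {c y : Fin n → A}
    {q : Fin n × Fin n} : q ∈ cellPairs R c y ↔
      ∃ a a', (c q.1 = a ∨ y q.1 = a) ∧ (c q.2 = a' ∨ y q.2 = a') ∧ R a a' := by
  simp [cellPairs]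

open Finset in
open Classical in
theorem card_cellPairs {n : ℕ} {A : Type} [Fintype A] (R : A → A → Prop) (c y : Fin n → A)
    (d : ℕ) (hR : ∀ a, (univ.filter (fun b => R a b)).card ≤ d) (L : ℝ)
    (hL : ∀ a, ((univ.filter (fun x => c x = a ∨ y x = a)).card : ℝ) ≤ L) :
    ((cellPairs R c y).card : ℝ) ≤ Fintype.card A * d * L ^ 2 := by
  have hsub : cellPairs R c y ⊆ (univ : Finset A).biUnion fun a =>
      (univ.filter (fun b => R a b)).biUnion fun b =>
        univ.filter (fun x => c x = a ∨ y x = a) ×ˢ univ.filter (fun x => c x = b ∨ y x = b) := by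
    intro q hq
    simp only [cellPairs, mem_filter, mem_univ, true_and] at hq
    obtain ⟨a, a', h1, h2, h3⟩ := hq
    simp only [mem_biUnion, mem_filter, mem_univ, true_and, mem_product]
    exact ⟨a, a', h3, h1, h2⟩
  have hnat := (card_le_card hsub).trans (card_biUnion_le.trans
    (sum_le_sum fun a _ => card_biUnion_le))
  have hreal : ((cellPairs R c y).card : ℝ) ≤ ∑ a : A, ∑ b ∈ univ.filter (fun b => R a b),
      ((univ.filter (fun x => c x = a ∨ y x = a) ×ˢ
        univ.filter (fun x => c x = b ∨ y x = b)).card : ℝ) := by exact_mod_cast hnat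
  refine hreal.trans ?_
  have : ∀ a ∈ (univ : Finset A), ∑ b ∈ univ.filter (fun b => R a b),
      ((univ.filter (fun x => c x = a ∨ y x = a) ×ˢ
        univ.filter (fun x => c x = b ∨ y x = b)).card : ℝ) ≤ d * L ^ 2 := by
    intro a _
    have : ∀ b ∈ univ.filter (fun b => R a b), ((univ.filter (fun x => c x = a ∨ y x = a) ×ˢ
        univ.filter (fun x => c x = b ∨ y x = b)).card : ℝ) ≤ L ^ 2 := by
      intro b _
      rw [card_product, Nat.cast_mul, sq]
      exact mul_le_mul (hL a) (hL b) (Nat.cast_nonneg _) ((Nat.cast_nonneg _).trans (hL a))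
    refine (sum_le_card_nsmul _ _ _ this).trans ?_
    rw [nsmul_eq_mul]
    exact mul_le_mul_of_nonneg_right (by exact_mod_cast hR a) (sq_nonneg _)
  refine (sum_le_card_nsmul _ _ _ this).trans ?_
  rw [nsmul_eq_mul, card_univ, mul_assoc]

open Finset in
/-- The sets of `2 * s` vertices that are unions of `s` pairs taken from `P`. -/
def pairEdges {n : ℕ} (s : ℕ) (P : Finset (Fin n × Fin n)) : Finset (Finset (Fin n)) :=
  ((Fintype.piFinset fun _ : Fin s => P).image
    (fun b => univ.biUnion fun i => {(b i).1, (b i).2})).filter (fun e => e.card = 2 * s)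

open Finset in
theorem card_pairEdges {n : ℕ} (s : ℕ) (P : Finset (Fin n × Fin n)) :
    (pairEdges s P).card ≤ P.card ^ s := by
  refine (card_filter_le _ _).trans (card_image_le.trans ?_)
  rw [Fintype.card_piFinset]
  simp

/-- Splitting the `2 * s` vertices of every edge into `s` pairs and properly colouring the flags
(incidences) by König's theorem, `Δ` partial maps record the pairing: the map of colour `c` sends a
vertex `v` to its partner inside the edge whose flag at `v` has colour `c`. The two flags of a pair
have different colours. -/
theorem pairing_maps {n s Δ : ℕ} (hΔ : 2 ≤ Δ) (EF : Finset (Finset (Fin n)))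
    (hcard : ∀ e ∈ EF, e.card = 2 * s) (hdeg : ∀ v : Fin n, (EF.filter (fun e => v ∈ e)).card ≤ Δ) :
    ∃ g : Fin Δ → Fin n → Option (Fin n),
      (∀ c w, (Finset.univ.filter (fun v => g c v = some w)).card ≤ Δ) ∧
      ∀ e ∈ EF, ∃ a b : Fin s → Fin n, e = Finset.univ.biUnion (fun i => {a i, b i}) ∧
        ∀ i, ∃ c c', c ≠ c' ∧ g c (a i) = some (b i) ∧ g c' (b i) = some (a i) := by
  classical
  have hen : ∀ e : {e // e ∈ EF}, Nonempty (Fin s × Bool ≃ {v // v ∈ e.1}) := by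
    intro e
    refine ⟨Fintype.equivOfCardEq ?_⟩
    simp only [Fintype.card_prod, Fintype.card_fin, Fintype.card_bool, Fintype.card_coe,
      hcard e.1 e.2]
    ring
  let enum := fun e => (hen e).some
  let π₁ : {e // e ∈ EF} × (Fin s × Bool) → Fin n := fun x => (enum x.1 x.2).1
  let π₂ : {e // e ∈ EF} × (Fin s × Bool) → {e // e ∈ EF} × Fin s := fun x => (x.1, x.2.1)
  let fl : {e // e ∈ EF} × (Fin s × Bool) → {e // e ∈ EF} × (Fin s × Bool) :=
    fun x => (x.1, (x.2.1, !x.2.2))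
  have h1 : ∀ v, (Finset.univ.filter (fun x => π₁ x = v)).card ≤ Δ := by
    intro v
    refine le_trans (Finset.card_le_card_of_injOn (fun x => x.1.1) ?_ ?_) (hdeg v)
    · intro x hx
      simp only [Finset.coe_filter, Finset.mem_univ, true_and, Set.mem_ofPred_eq] at hx ⊢
      exact ⟨x.1.2, hx ▸ (enum x.1 x.2).2⟩
    · rintro ⟨e, k⟩ hx ⟨e', k'⟩ hx' hee
      simp only [Finset.coe_filter, Finset.mem_univ, true_and, Set.mem_ofPred_eq] at hx hx'
      have : e = e' := Subtype.ext hee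
      subst this
      have : enum e k = enum e k' := Subtype.ext (hx.trans hx'.symm)
      rw [(enum e).injective this]
  have h2 : ∀ q, (Finset.univ.filter (fun x => π₂ x = q)).card ≤ Δ := by
    rintro ⟨e, i⟩
    refine le_trans (Finset.card_le_card (t := {(e, (i, false)), (e, (i, true))}) ?_)
      (Finset.card_le_two.trans hΔ)
    rintro ⟨e', i', b⟩ hx
    simp only [Finset.mem_filter, Finset.mem_univ, true_and, π₂, Prod.mk.injEq] at hx
    obtain ⟨rfl, rfl⟩ := hx
    cases b <;> simp
  obtain ⟨col, hcol⟩ := konig_coloring π₁ π₂ Δ h1 h2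
  have hinj : ∀ x x', π₁ x = π₁ x' → col x = col x' → x = x' := by
    intro x x' h h'
    by_contra hne
    exact hcol x x' hne (Or.inl h) h'
  let g : Fin Δ → Fin n → Option (Fin n) := fun c v =>
    if h : ∃ x, π₁ x = v ∧ col x = c then some (π₁ (fl h.choose)) else none
  have hg : ∀ x, g (col x) (π₁ x) = some (π₁ (fl x)) := by
    intro x
    have h : ∃ x', π₁ x' = π₁ x ∧ col x' = col x := ⟨x, rfl, rfl⟩
    simp only [g, dif_pos h]
    rw [hinj _ x h.choose_spec.1 h.choose_spec.2]
  have hg' : ∀ c v w, g c v = some w → ∃ x, π₁ x = v ∧ π₁ (fl x) = w := by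
    intro c v w h
    by_cases hx : ∃ x, π₁ x = v ∧ col x = c
    · simp only [g, dif_pos hx, Option.some.injEq] at h
      exact ⟨_, hx.choose_spec.1, h⟩
    · simp only [g, dif_neg hx] at h
      cases h
  have hfl : ∀ x, fl (fl x) = x := by
    rintro ⟨e, i, b⟩
    simp [fl]
  refine ⟨g, fun c w => ?_, fun e he => ?_⟩
  · refine le_trans (Finset.card_le_card
      (t := (Finset.univ.filter (fun x => π₁ x = w)).image (fun x => π₁ (fl x))) ?_)
      (Finset.card_image_le.trans (h1 w))
    intro v hv
    obtain ⟨x, hx, hx'⟩ := hg' c v w (by simpa using hv)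
    simp only [Finset.mem_image, Finset.mem_filter, Finset.mem_univ, true_and]
    exact ⟨fl x, hx', by rw [hfl, hx]⟩
  · refine ⟨fun i => π₁ (⟨e, he⟩, i, false), fun i => π₁ (⟨e, he⟩, i, true), ?_, fun i => ?_⟩
    · ext v
      simp only [Finset.mem_biUnion, Finset.mem_univ, true_and, Finset.mem_insert,
        Finset.mem_singleton]
      constructor
      · intro hv
        obtain ⟨⟨i, b⟩, hk⟩ := (enum ⟨e, he⟩).surjective ⟨v, hv⟩
        have hk' : π₁ (⟨e, he⟩, i, b) = v := congrArg Subtype.val hk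
        cases b
        · exact ⟨i, Or.inl hk'.symm⟩
        · exact ⟨i, Or.inr hk'.symm⟩
      · rintro ⟨i, rfl | rfl⟩
        · exact (enum ⟨e, he⟩ (i, false)).2
        · exact (enum ⟨e, he⟩ (i, true)).2
    · exact ⟨col (⟨e, he⟩, i, false), col (⟨e, he⟩, i, true),
        hcol _ _ (by simp) (Or.inr rfl), hg _, hg _⟩

open Finset in
/-- The construction with explicit parameters: cells are `Δ`-tuples of words of length `t` over
`4 * Δ` letters, and the edges of the host are unions of `s` pairs of vertices in adjacent cells. -/
theorem host_universal (n s Δ t : ℕ) (hΔ : 2 ≤ Δ) (ht : 1 ≤ t) (T X : ℝ) (htT : (t : ℝ) ≤ T)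
    (hX0 : 0 ≤ X) (hX : 2 * (((4 * Δ : ℕ) : ℝ) ^ t) ^ Δ < Real.exp X)
    (hμ : 131072 * (Δ : ℝ) ^ 2 * T * X ≤ (n : ℝ) / (((4 * Δ : ℕ) : ℝ) ^ t) ^ Δ)
    (hℓ : 32 ≤ (n : ℝ) / (((4 * Δ : ℕ) : ℝ) ^ t) ^ Δ)
    (hM : (((4 * Δ : ℕ) : ℝ) ^ t) ^ Δ *
      Real.exp (-((n : ℝ) / (((4 * Δ : ℕ) : ℝ) ^ t) ^ Δ / 16)) ≤ 1 / 8) :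
    ∃ EH : Finset (Finset (Fin n)), (∀ e ∈ EH, e.card = 2 * s) ∧
      (EH.card : ℝ) ≤ (36 * (Δ : ℝ) ^ 2 * (6 * (4 * Δ) ^ 2) ^ 2 * (n : ℝ) ^ 2 /
        (((4 * Δ : ℕ) : ℝ) ^ t) ^ 2) ^ s ∧
      HypergraphUniversal (2 * s) n Δ n EH := by
  classical
  have hA : (Fintype.card (Fin Δ → Fin t → Fin (4 * Δ)) : ℝ) = (((4 * Δ : ℕ) : ℝ) ^ t) ^ Δ := by
    simp
  have : Nonempty (Fin Δ → Fin t → Fin (4 * Δ)) := ⟨fun _ _ => ⟨0, by omega⟩⟩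
  obtain ⟨c, y, hc, hy, hexp⟩ := host_exists n (Fin Δ → Fin t → Fin (4 * Δ))
    (by rw [hA]; exact hℓ) (by rw [hA]; exact hM)
  rw [hA] at hc hy hexp
  set m : ℝ := ((4 * Δ : ℕ) : ℝ) ^ t with hm
  have hm0 : 0 < m := by
    have : 0 < 4 * Δ := by omega
    positivity
  set ℓ : ℝ := (n : ℝ) / m ^ Δ with hℓd
  refine ⟨pairEdges s (cellPairs Adj c y), fun e he => (mem_filter.1 he).2, ?_, ?_⟩
  · have h1 : ((pairEdges s (cellPairs Adj c y)).card : ℝ) ≤ ((cellPairs Adj c y).card : ℝ) ^ s := by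
      exact_mod_cast card_pairEdges s (cellPairs Adj c y)
    refine h1.trans (pow_le_pow_left₀ (Nat.cast_nonneg _) ?_ s)
    have h2 := card_cellPairs (Adj (Δ := Δ) (t := t) (D := 4 * Δ)) c y _ (fun a => card_adj ht a)
      (6 * ℓ) (by
        intro a
        have hu : ((univ.filter (fun x => c x = a ∨ y x = a)).card : ℝ) ≤
            (univ.filter (fun x => c x = a)).card + (univ.filter (fun x => y x = a)).card := by
          rw [filter_or]
          exact_mod_cast card_union_le _ _
        have hu' : ((univ.filter (fun x => c x = a ∨ y x = a)).card : ℝ) ≤ 6 * ℓ := by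
          linarith [(hc a).2, hy a]
        convert hu')
    refine h2.trans (le_of_eq ?_)
    rw [hA]
    have h3 : m ^ Δ = m ^ (Δ - 2) * m ^ 2 := by rw [← pow_add]; congr 1; omega
    have h4 : (((4 * Δ) ^ t : ℕ) : ℝ) = m := by rw [hm]; push_cast; rfl
    rw [Nat.cast_mul, Nat.cast_mul, Nat.cast_pow _ (Δ - 2), h4, hℓd, h3]
    push_cast
    field_simp
    ring
  · intro EF hcard hdeg
    obtain ⟨g, hgdeg, hpair⟩ := pairing_maps hΔ EF hcard hdeg
    choose p ρ hρ hpdeg hnear using fun k => acyclify (g k)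
    obtain ⟨F, hF, hcell⟩ := walk_all (V := Fin n) Δ Δ t (by omega) p ρ hρ (by omega) ht
      (fun k w => (hpdeg k w).trans (hgdeg k w)) T X htT hX0 hX (by rw [Fintype.card_fin]; exact hμ)
    obtain ⟨φ, hφ, hφc⟩ := hall_embedding n (Fin Δ → Fin t → Fin (4 * Δ)) ℓ c y
      (fun v => fun i j => F i v j) hc (by simpa only [Fintype.card_fin] using hcell)
      (fun S h h' => by rw [hA]; exact hexp S h h')
    refine ⟨φ, hφ, fun e he => ?_⟩
    obtain ⟨a, b, hab, hcol⟩ := hpair e he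
    refine mem_filter.2 ⟨mem_image.2 ⟨fun i => (φ (a i), φ (b i)), ?_, ?_⟩, ?_⟩
    · rw [Fintype.mem_piFinset]
      intro i
      obtain ⟨k, k', hk, h, h'⟩ := hcol i
      refine mem_cellPairs.2 ⟨_, _, hφc (a i), hφc (b i), k, k', hk, ?_, ?_⟩
      · exact (hnear k _ _ h).wordRel (hF k)
      · exact ((hnear k' _ _ h').wordRel (hF k')).symm
    · conv_rhs => rw [hab]
      rw [biUnion_image]
      simp [image_insert]
    · rw [card_image_of_injective _ hφ, hcard e he]

/-! ### Choice of parameters -/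

/-- For large `n`, a word length `t` with `(4 * Δ) ^ (t * Δ)` of order `n / log n ^ 2` meets the
requirements of `host_universal`. -/
theorem host_large (n s Δ : ℕ) (hΔ : 2 ≤ Δ) (hn : 3 ≤ n)
    (hbig : ((4 * Δ : ℕ) : ℝ) ^ Δ * (262144 * (Δ : ℝ) ^ 2) * Real.log n ^ 2 ≤ n) :
    ∃ EH : Finset (Finset (Fin n)), (∀ e ∈ EH, e.card = 2 * s) ∧
      (EH.card : ℝ) ≤ (36 * (Δ : ℝ) ^ 2 * (6 * (4 * Δ) ^ 2) ^ 2) ^ s *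
        (((4 * Δ : ℕ) : ℝ) ^ Δ * (262144 * (Δ : ℝ) ^ 2)) ^ ((2 * s : ℝ) / Δ) *
        (n : ℝ) ^ ((2 * s : ℝ) - (2 * s : ℝ) / Δ) * Real.log n ^ (2 * (2 * s : ℝ) / Δ) ∧
      HypergraphUniversal (2 * s) n Δ n EH := by
  set b : ℝ := ((4 * Δ : ℕ) : ℝ) ^ Δ with hb
  set C₀ : ℝ := 262144 * (Δ : ℝ) ^ 2 with hC₀
  set L : ℝ := Real.log n with hL
  have hΔ' : (2 : ℝ) ≤ Δ := by exact_mod_cast hΔ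
  have hn' : (3 : ℝ) ≤ n := by exact_mod_cast hn
  have hn0 : (0 : ℝ) < n := by linarith
  have hL1 : 1 ≤ L := by
    rw [hL, Real.le_log_iff_exp_le hn0]
    exact Real.exp_one_lt_three.le.trans hn'
  have hL2 : L ≤ L ^ 2 := by nlinarith
  have hC1 : 32 ≤ C₀ := by rw [hC₀]; nlinarith
  have hC0 : 0 < C₀ := by linarith
  have hb64 : 64 ≤ b := by
    have h8 : (8 : ℝ) ≤ ((4 * Δ : ℕ) : ℝ) := by push_cast; linarith
    calc (64 : ℝ) = 8 ^ 2 := by norm_num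
      _ ≤ 8 ^ Δ := pow_le_pow_right₀ (by norm_num) hΔ
      _ ≤ b := pow_le_pow_left₀ (by norm_num) h8 Δ
  have hCL : 0 < C₀ * L ^ 2 := by positivity
  have hCL32 : 32 * L ≤ C₀ * L ^ 2 := by nlinarith
  have hbR : b ≤ n / (C₀ * L ^ 2) := by
    rw [le_div_iff₀ hCL]; linarith
  obtain ⟨t, ht1, ht2⟩ := exists_nat_pow_near (x := n / (C₀ * L ^ 2)) (y := b)
    (by linarith) (by linarith)
  have ht : 1 ≤ t := by
    by_contra h
    have : t = 0 := by omega
    rw [this] at ht2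
    simp at ht2
    linarith
  have hMe : (((4 * Δ : ℕ) : ℝ) ^ t) ^ Δ = b ^ t := by rw [hb, ← pow_mul, ← pow_mul, Nat.mul_comm t Δ]
  have hM0 : 0 < b ^ t := by positivity
  have hMn : b ^ t * (C₀ * L ^ 2) ≤ n := (le_div_iff₀ hCL).1 ht1
  have hM32 : 32 * b ^ t ≤ n := by nlinarith
  have hℓ : C₀ * L ^ 2 ≤ n / b ^ t := by rw [le_div_iff₀ hM0]; linarith
  have hexpL : Real.exp L = n := Real.exp_log hn0
  have hexp2 : Real.exp (2 * L) = (n : ℝ) ^ 2 := by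
    rw [← hexpL, ← Real.exp_nat_mul]; norm_num
  obtain ⟨EH, h1, h2, h3⟩ := host_universal n s Δ t hΔ ht L (2 * L)
    (by
      have h2t : Real.exp t ≤ b ^ t := by
        rw [← mul_one (t : ℝ), Real.exp_nat_mul]
        exact pow_le_pow_left₀ (Real.exp_pos _).le
          (Real.exp_one_lt_three.le.trans (by linarith)) t
      rw [hL, Real.le_log_iff_exp_le hn0]
      linarith)
    (by linarith)
    (by rw [hMe, hexp2]; nlinarith)
    (by rw [hMe]; refine le_trans (le_of_eq ?_) hℓ; rw [hC₀]; ring)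
    (by rw [hMe]; linarith)
    (by
      rw [hMe]
      have he : Real.exp (-(n / b ^ t / 16)) ≤ ((n : ℝ) ^ 2)⁻¹ := by
        rw [← hexp2, ← Real.exp_neg]
        exact Real.exp_le_exp.2 (by linarith)
      calc b ^ t * Real.exp (-(n / b ^ t / 16)) ≤ b ^ t * ((n : ℝ) ^ 2)⁻¹ := by gcongr
        _ ≤ 1 / 8 := by
          rw [← div_eq_mul_inv, div_le_iff₀ (by positivity)]
          nlinarith)
  refine ⟨EH, h1, h2.trans ?_, h3⟩
  set m : ℝ := ((4 * Δ : ℕ) : ℝ) ^ t with hm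
  have hm0 : 0 < m := by
    have : 0 < 4 * Δ := by omega
    positivity
  set K : ℝ := 36 * (Δ : ℝ) ^ 2 * (6 * (4 * Δ) ^ 2) ^ 2
  have hq : (n : ℝ) / (b * C₀ * L ^ 2) ≤ m ^ Δ := by
    rw [hMe, div_le_iff₀ (by positivity)]
    rw [div_lt_iff₀ hCL, pow_succ] at ht2
    linarith
  have hmr : ((n : ℝ) / (b * C₀ * L ^ 2)) ^ ((2 * s : ℝ) / Δ) ≤ m ^ (2 * s) := by
    refine (Real.rpow_le_rpow (by positivity) hq (by positivity)).trans (le_of_eq ?_)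
    rw [← Real.rpow_natCast m Δ, ← Real.rpow_mul hm0.le, ← Real.rpow_natCast m (2 * s)]
    congr 1
    push_cast
    field_simp
  have hbC : 0 < b * C₀ := by positivity
  have hL0 : 0 < L := by linarith
  have hsplit : ((n : ℝ) / (b * C₀ * L ^ 2)) ^ ((2 * s : ℝ) / Δ) =
      (n : ℝ) ^ ((2 * s : ℝ) / Δ) / ((b * C₀) ^ ((2 * s : ℝ) / Δ) * L ^ (2 * (2 * s : ℝ) / Δ)) := by
    rw [Real.div_rpow hn0.le (by positivity), Real.mul_rpow hbC.le (by positivity),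
      ← Real.rpow_natCast L 2, ← Real.rpow_mul hL0.le]
    congr 3
    push_cast
    ring
  have hP : 0 < (n : ℝ) ^ ((2 * s : ℝ) / Δ) := Real.rpow_pos_of_pos hn0 _
  have hQ : 0 < (b * C₀) ^ ((2 * s : ℝ) / Δ) * L ^ (2 * (2 * s : ℝ) / Δ) :=
    mul_pos (Real.rpow_pos_of_pos hbC _) (Real.rpow_pos_of_pos hL0 _)
  rw [hsplit] at hmr
  calc (K * (n : ℝ) ^ 2 / m ^ 2) ^ s = K ^ s * (n : ℝ) ^ (2 * s) / m ^ (2 * s) := by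
        rw [div_pow, mul_pow, ← pow_mul, ← pow_mul]
    _ ≤ K ^ s * (n : ℝ) ^ (2 * s) / ((n : ℝ) ^ ((2 * s : ℝ) / Δ) /
        ((b * C₀) ^ ((2 * s : ℝ) / Δ) * L ^ (2 * (2 * s : ℝ) / Δ))) := by
        gcongr
    _ = _ := by
        rw [Real.rpow_sub hn0, ← Real.rpow_natCast (n : ℝ) (2 * s)]
        push_cast
        field_simp

theorem log_sq_threshold (B : ℝ) (hB : 0 < B) :
    ∃ n₀ : ℕ, ∀ n : ℕ, n₀ ≤ n → 3 ≤ n ∧ B * Real.log n ^ 2 ≤ n := by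
  have h := (Real.isLittleO_pow_log_id_atTop (n := 2)).bound (c := 1 / B) (by positivity)
  have h' := (tendsto_natCast_atTop_atTop (R := ℝ)).eventually h
  obtain ⟨n₁, hn₁⟩ := Filter.eventually_atTop.1 h'
  refine ⟨max 3 n₁, fun n hn => ⟨le_trans (le_max_left _ _) hn, ?_⟩⟩
  have := hn₁ n (le_trans (le_max_right _ _) hn)
  simp only [Real.norm_eq_abs, id, abs_pow, sq_abs, Nat.abs_cast] at this
  rw [div_mul_eq_mul_div, one_mul, le_div_iff₀ hB] at this
  linarith

/-- for even `r ≥ 4` and `Δ ≥ 2` there are `𝓕^(r)(n,Δ)`-universal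
`r`-uniform hypergraphs on exactly `n` vertices with at most
`C·n^{r-r/Δ}·(ln n)^{2r/Δ}` edges. -/
theorem universal_even_uniformity_spanning (r Δ : ℕ) (hr : 4 ≤ r) (hre : Even r)
    (hΔ : 2 ≤ Δ) :
    ∃ C : ℝ, 0 < C ∧ ∀ n : ℕ, 2 ≤ n →
      ∃ EH : Finset (Finset (Fin n)),
        (∀ e ∈ EH, e.card = r) ∧
        (EH.card : ℝ) ≤ C * (n : ℝ) ^ ((r : ℝ) - (r : ℝ) / (Δ : ℝ)) *
          Real.log n ^ ((2 * r : ℝ) / (Δ : ℝ)) ∧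
        HypergraphUniversal r n Δ n EH := by
  obtain ⟨s, hs⟩ := hre
  obtain rfl : r = 2 * s := by omega
  have hΔ0 : (0 : ℝ) < Δ := by exact_mod_cast (by omega : 0 < Δ)
  set B : ℝ := ((4 * Δ : ℕ) : ℝ) ^ Δ * (262144 * (Δ : ℝ) ^ 2) with hB
  have hB0 : 0 < B := by
    have : 0 < 4 * Δ := by omega
    positivity
  obtain ⟨n₀, hn₀⟩ := log_sq_threshold B hB0
  set C₁ : ℝ := (36 * (Δ : ℝ) ^ 2 * (6 * (4 * Δ) ^ 2) ^ 2) ^ s * B ^ ((2 * s : ℝ) / Δ) with hC₁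
  have hC₁0 : 0 < C₁ := mul_pos (by positivity) (Real.rpow_pos_of_pos hB0 _)
  have hlog2 : 0 < Real.log 2 := Real.log_pos (by norm_num)
  set C₂ : ℝ := (n₀ : ℝ) ^ ((2 * s : ℝ) / Δ) / Real.log 2 ^ (2 * (2 * s : ℝ) / Δ) with hC₂
  have hC₂0 : 0 ≤ C₂ := by positivity
  refine ⟨C₁ + C₂, by linarith, fun n hn => ?_⟩
  have hn2 : (2 : ℝ) ≤ n := by exact_mod_cast hn
  have hn0 : (0 : ℝ) < n := by linarith
  have hlog : Real.log 2 ≤ Real.log n := Real.log_le_log (by norm_num) hn2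
  push_cast
  set P : ℝ := (n : ℝ) ^ ((2 * s : ℝ) - (2 * s : ℝ) / Δ) with hP
  set Q : ℝ := Real.log n ^ (2 * (2 * s : ℝ) / Δ) with hQ
  have hP0 : 0 < P := Real.rpow_pos_of_pos hn0 _
  have hQ0 : 0 < Q := Real.rpow_pos_of_pos (by linarith) _
  by_cases h : n₀ ≤ n
  · obtain ⟨h3, hbig⟩ := hn₀ n h
    obtain ⟨EH, h1, h2, hU⟩ := host_large n s Δ hΔ h3 hbig
    refine ⟨EH, h1, h2.trans ?_, hU⟩
    rw [add_mul, add_mul]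
    have : 0 ≤ C₂ * P * Q := by positivity
    exact le_add_of_nonneg_right this
  -- For small `n` the complete hypergraph is universal.
  · refine ⟨Finset.univ.powersetCard (2 * s), fun e he => (Finset.mem_powersetCard.1 he).2, ?_, ?_⟩
    · have hcard : ((Finset.univ.powersetCard (2 * s) : Finset (Finset (Fin n))).card : ℝ) ≤
          (n : ℝ) ^ (2 * s) := by
        rw [Finset.card_powersetCard, Finset.card_univ, Fintype.card_fin]
        exact_mod_cast Nat.choose_le_pow n (2 * s)
      have hle : (n : ℝ) ^ ((2 * s : ℝ) / Δ) ≤ (n₀ : ℝ) ^ ((2 * s : ℝ) / Δ) :=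
        Real.rpow_le_rpow hn0.le (by exact_mod_cast (not_le.1 h).le) (by positivity)
      have hQ2 : Real.log 2 ^ (2 * (2 * s : ℝ) / Δ) ≤ Q :=
        Real.rpow_le_rpow hlog2.le hlog (by positivity)
      have hl0 : 0 < Real.log 2 ^ (2 * (2 * s : ℝ) / Δ) := Real.rpow_pos_of_pos hlog2 _
      have hnP : (n : ℝ) ^ (2 * s) = P * (n : ℝ) ^ ((2 * s : ℝ) / Δ) := by
        rw [hP, ← Real.rpow_add hn0, sub_add_cancel, ← Real.rpow_natCast]
        push_cast
        rfl
      calc _ ≤ (n : ℝ) ^ (2 * s) := hcard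
        _ = P * (n : ℝ) ^ ((2 * s : ℝ) / Δ) := hnP
        _ ≤ P * (n₀ : ℝ) ^ ((2 * s : ℝ) / Δ) := by gcongr
        _ = C₂ * P * Real.log 2 ^ (2 * (2 * s : ℝ) / Δ) := by
          rw [hC₂]; field_simp
        _ ≤ C₂ * P * Q := by gcongr
        _ ≤ (C₁ + C₂) * P * Q := by
          gcongr
          linarith
    · intro EF hE _
      refine ⟨id, Function.injective_id, fun e he => ?_⟩
      rw [Finset.image_id]
      exact Finset.mem_powersetCard.2 ⟨Finset.subset_univ _, hE e he⟩
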